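/- arXiv:2512.12329 — 2 statements merged into one kernel-verified Lean document; each statement's English description precedes it below -/
import Mathlib

section
/- For every integer ℓ ≥ 3, there exists an integer k (one may take k = (ℓ-1)²) such that every finite graph G not containing the ℓ-wheel W_ℓ as an induced minor has a balanced separator dominated by at most k vertices; that is, there exist S, D ⊆ V(G) with |D| ≤ k, S ⊆ N[D], and every connected component of G - S containing at most |V(G)|/2 vertices. -/
open SimpleGraph

variable {V : Type}

/-- `u` and `v` are connected by a walk in `G` avoiding `S`
(i.e., they lie in the same component of `G - S`). -/
def ReachOutside (G : SimpleGraph V) (S : Set V) (u v : V) : Prop :=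
  ∃ p : G.Walk u v, ∀ x ∈ p.support, x ∉ S

/-- Total weight of a vertex set. -/
noncomputable def setWeight [Finite V] (w : V → ℝ) (A : Set V) : ℝ :=
  ∑ v ∈ (Set.toFinite A).toFinset, w v

/-- `S` is a `w`-balanced separator of `G`: every component of `G - S`
has weight at most half the total weight. -/
def IsBalancedSep [Finite V] (G : SimpleGraph V) (w : V → ℝ) (S : Set V) : Prop :=
  ∀ v, v ∉ S → setWeight w {u | ReachOutside G S u v} ≤ setWeight w (Set.univ : Set V) / 2

/-- Closed neighbourhood `N[A]` of a vertex set. -/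
def closedNbhd (G : SimpleGraph V) (A : Set V) : Set V :=
  A ∪ {x | ∃ a ∈ A, G.Adj a x}

/-- `S` separates `A` from `B` in `G`: every walk from `A` to `B` meets `S`. -/
def Separates (G : SimpleGraph V) (S A B : Set V) : Prop :=
  ∀ a ∈ A, ∀ b ∈ B, ∀ p : G.Walk a b, ∃ x ∈ p.support, x ∈ S

/-- `C` is (the vertex set of) an induced cycle of `G`: the induced subgraph is
connected and every vertex of `C` has exactly two neighbours in `C`. -/
def IsInducedCycle (G : SimpleGraph V) (C : Set V) : Prop :=
  (G.induce C).Connected ∧ ∀ x ∈ C, (G.neighborSet x ∩ C).ncard = 2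

/-- `H` is an induced minor of `G`. -/
def IsInducedMinor {W : Type} (H : SimpleGraph W) (G : SimpleGraph V) : Prop :=
  ∃ X : W → Set V,
    (∀ a, (G.induce (X a)).Connected) ∧
    (Pairwise fun a b => Disjoint (X a) (X b)) ∧
    ∀ a b, a ≠ b → ((∃ u ∈ X a, ∃ v ∈ X b, G.Adj u v) ↔ H.Adj a b)

/-- `H` is a minor of `G`. -/
def IsMinor {W : Type} (H : SimpleGraph W) (G : SimpleGraph V) : Prop :=
  ∃ X : W → Set V,
    (∀ a, (G.induce (X a)).Connected) ∧
    (Pairwise fun a b => Disjoint (X a) (X b)) ∧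
    ∀ a b, H.Adj a b → ∃ u ∈ X a, ∃ v ∈ X b, G.Adj u v

/-- The `ℓ`-wheel: a cycle of length `ℓ` plus a universal vertex (`none`). -/
def wheel (ℓ : ℕ) : SimpleGraph (Option (ZMod ℓ)) :=
  SimpleGraph.fromRel fun a b =>
    a = none ∨ b = none ∨ ∃ i : ZMod ℓ, a = some i ∧ b = some (i + 1)

/-- The `ℓ`-fan: a path on `ℓ` vertices plus a universal vertex (`none`). -/
def fan (ℓ : ℕ) : SimpleGraph (Option (Fin ℓ)) :=
  SimpleGraph.fromRel fun a b =>
    a = none ∨ b = none ∨ ∃ i j : Fin ℓ, a = some i ∧ b = some j ∧ (j : ℕ) = (i : ℕ) + 1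

/-
Suppose that no balanced separator is dominated by `(ℓ - 1)²` vertices. Then for every set `D` of at
most that many vertices `G - N[D]` has a large component, and any two large components meet. Say
that `D` shields `A` if the large component of `G - N[D]` neither meets `A` nor is adjacent to it.

Every induced cycle `C` is shielded by `ℓ - 1` vertices. Indeed, a component `Y` of `G - C` has at
most `ℓ - 1` neighbours on `C`, since otherwise contracting `Y` and arcs of `C` gives `W_ℓ`. If `C`
is not shielded, then one of the arcs into which the neighbours of `Y` cut `C` is not shielded by
`ℓ - 1` vertices, or else `(ℓ - 1)²` vertices shield `C`. After rerouting `C`, such arcs are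
separated from the rest of `C` by their two ends. Take a shortest separated arc and inside it a
longest arc with separated complement: uncrossing shows that their four ends shield `C` after all.

Now grow an induced path in the manner of Gyárfás, keeping its last vertex in or next to a large
component `B` of what remains after removing the closed neighbourhood of the others. Unless one
vertex of the path sees all neighbours of `B`, part of the path closes up through `B` to an induced
cycle which sees them all; shielding it confines the next large component to `B`. So `B` shrinks
strictly at every step, which is absurd in a finite graph.
-/

namespace WheelSep

section Component

variable {G : SimpleGraph V} {S Y A : Set V} {u v : V}

lemma subset_of_connected_of_adj_mem {T : Set V} (hA : (G.induce A).Connected) {x : V}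
    (hxA : x ∈ A) (hxT : x ∈ T) (hT : ∀ a ∈ A, a ∈ T → ∀ b ∈ A, G.Adj a b → b ∈ T) :
    A ⊆ T := by
  suffices h : ∀ b : A, Relation.ReflTransGen (G.induce A).Adj ⟨x, hxA⟩ b → (b : V) ∈ T from
    fun y hy ↦ h ⟨y, hy⟩ ((reachable_iff_reflTransGen _ _).1 (hA.preconnected _ _))
  intro b hxb
  induction hxb with
  | refl => exact hxT
  | @tail b c _ hbc ih => exact hT b b.2 ih c c.2 hbc

/-- `Y` is the vertex set of a connected component of `G - S`. -/
structure IsComponent (G : SimpleGraph V) (S Y : Set V) : Prop where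
  connected : (G.induce Y).Connected
  disjoint : Disjoint Y S
  mem_or_mem : ∀ ⦃x y⦄, x ∈ Y → G.Adj x y → y ∈ Y ∨ y ∈ S

lemma IsComponent.subset_of_connected (hY : IsComponent G S Y) (hA : (G.induce A).Connected)
    (hAS : Disjoint A S) {x : V} (hxA : x ∈ A) (hxY : x ∈ Y) : A ⊆ Y :=
  subset_of_connected_of_adj_mem hA hxA hxY fun _ _ haY _ hb hab ↦
    (hY.mem_or_mem haY hab).resolve_right (hAS.notMem_of_mem_left hb)

lemma isComponent_reachOutside (hv : v ∉ S) : IsComponent G S {u | ReachOutside G S u v} where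
  connected := by
    classical
    refine induce_connected_of_patches v ⟨.nil, by simpa using hv⟩ ?_
    rintro u ⟨p, hp⟩
    exact ⟨{z | z ∈ p.support},
      fun z hz ↦ ⟨p.dropUntil z hz, fun x hx ↦ hp x (p.support_dropUntil_subset_support hz hx)⟩,
      p.end_mem_support, p.start_mem_support, p.connected_induce_support.preconnected _ _⟩
  disjoint := Set.disjoint_left.2 fun _ ⟨p, hp⟩ ↦ hp _ p.start_mem_support
  mem_or_mem := by
    rintro x y ⟨p, hp⟩ hxy
    by_cases hy : y ∈ S
    · exact .inr hy
    · exact .inl ⟨.cons hxy.symm p, by simpa [hy] using hp⟩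

lemma exists_isComponent_superset (hA : (G.induce A).Connected) (hAS : Disjoint A S) :
    ∃ Y, IsComponent G S Y ∧ A ⊆ Y := by
  obtain ⟨v, hv⟩ := hA.nonempty
  have hvS := hAS.notMem_of_mem_left hv
  have hY := isComponent_reachOutside (G := G) hvS
  exact ⟨_, hY, hY.subset_of_connected hA hAS hv ⟨.nil, by simpa using hvS⟩⟩

lemma subset_closedNbhd (G : SimpleGraph V) (A : Set V) : A ⊆ closedNbhd G A :=
  Set.subset_union_left

lemma mem_closedNbhd_of_adj (hu : u ∈ A) (huv : G.Adj u v) : v ∈ closedNbhd G A :=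
  .inr ⟨u, hu, huv⟩

lemma closedNbhd_mono {A' : Set V} (h : A ⊆ A') : closedNbhd G A ⊆ closedNbhd G A' :=
  Set.union_subset_union h fun _ ⟨a, ha, hax⟩ ↦ ⟨a, h ha, hax⟩

lemma disjoint_closedNbhd_comm {A' : Set V} :
    Disjoint A (closedNbhd G A') ↔ Disjoint A' (closedNbhd G A) := by
  suffices h : ∀ A A' : Set V, Disjoint A (closedNbhd G A') → Disjoint A' (closedNbhd G A) from
    ⟨h _ _, h _ _⟩
  refine fun A A' h ↦ Set.disjoint_left.2 ?_
  rintro x hx (hxA | ⟨a, ha, hax⟩)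
  · exact h.notMem_of_mem_left hxA (subset_closedNbhd G A' hx)
  · exact h.notMem_of_mem_left ha (mem_closedNbhd_of_adj hx hax.symm)

end Component

section Shielded

variable {G : SimpleGraph V} {𝓜 : Set (Set V)} {s t k : ℕ} {A A' B B' D D' : Set V}

/-- `B` is a component of `G - N[D]` belonging to `𝓜`, the family of "large" vertex sets. -/
structure IsMajorComponent (𝓜 : Set (Set V)) (G : SimpleGraph V) (D B : Set V) : Prop
    extends IsComponent G (closedNbhd G D) B where
  mem : B ∈ 𝓜

lemma IsMajorComponent.anti (h𝓜 : 𝓜.Intersecting) (hB : IsMajorComponent 𝓜 G D B)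
    (hB' : IsMajorComponent 𝓜 G D' B') (h : D ⊆ D') : B' ⊆ B := by
  obtain ⟨x, hx, hx'⟩ := Set.not_disjoint_iff.1 (h𝓜 hB.mem hB'.mem)
  exact hB.subset_of_connected hB'.connected (hB'.disjoint.mono_right (closedNbhd_mono h)) hx' hx

/-- Removing the closed neighbourhood of some set of at most `t` vertices leaves a component in
`𝓜` which neither meets `A` nor is adjacent to it. -/
def IsShielded (𝓜 : Set (Set V)) (G : SimpleGraph V) (t : ℕ) (A : Set V) : Prop :=
  ∃ D : Set V, D.ncard ≤ t ∧ ∃ B, IsMajorComponent 𝓜 G D B ∧ Disjoint B (closedNbhd G A)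

lemma IsShielded.mono (h : IsShielded 𝓜 G s A) (hst : s ≤ t) (hA : A' ⊆ A) :
    IsShielded 𝓜 G t A' := by
  obtain ⟨D, hD, B, hB, hBA⟩ := h
  exact ⟨D, hD.trans hst, B, hB, hBA.mono_right (closedNbhd_mono hA)⟩

lemma IsShielded.union (h𝓜 : 𝓜.Intersecting)
    (hmajor : ∀ D : Set V, D.ncard ≤ s + t → ∃ B, IsMajorComponent 𝓜 G D B)
    (hA : IsShielded 𝓜 G s A) (hA' : IsShielded 𝓜 G t A') : IsShielded 𝓜 G (s + t) (A ∪ A') := by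
  obtain ⟨D, hD, B, hB, hBA⟩ := hA
  obtain ⟨D', hD', B', hB', hBA'⟩ := hA'
  have hcard : (D ∪ D').ncard ≤ s + t := (Set.ncard_union_le _ _).trans (by lia)
  obtain ⟨C, hC⟩ := hmajor (D ∪ D') hcard
  refine ⟨D ∪ D', hcard, C, hC, ?_⟩
  rw [disjoint_closedNbhd_comm, Set.disjoint_union_left, disjoint_closedNbhd_comm,
    disjoint_closedNbhd_comm (A := A')]
  exact ⟨hBA.mono_left (hB.anti h𝓜 hC Set.subset_union_left),
    hBA'.mono_left (hB'.anti h𝓜 hC Set.subset_union_right)⟩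

lemma isShielded_of_ncard_le (hmajor : ∀ D : Set V, D.ncard ≤ t → ∃ B, IsMajorComponent 𝓜 G D B)
    (h : A.ncard ≤ t) : IsShielded 𝓜 G t A :=
  ⟨A, h, (hmajor A h).imp fun _ hB ↦ ⟨hB, hB.disjoint⟩⟩

lemma isShielded_biUnion (h𝓜 : 𝓜.Intersecting) {ι : Type*} (F : Finset ι) (A : ι → Set V)
    (hmajor : ∀ D : Set V, D.ncard ≤ F.card * s → ∃ B, IsMajorComponent 𝓜 G D B)
    (hA : ∀ i ∈ F, IsShielded 𝓜 G s (A i)) : IsShielded 𝓜 G (F.card * s) (⋃ i ∈ F, A i) := by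
  classical
  induction F using Finset.induction_on with
  | empty => exact isShielded_of_ncard_le hmajor (by simp)
  | insert i F hi ih =>
    rw [Finset.card_insert_of_notMem hi, add_one_mul, add_comm] at hmajor ⊢
    rw [Finset.set_biUnion_insert]
    exact (hA i (Finset.mem_insert_self i F)).union h𝓜 hmajor
      (ih (fun D hD ↦ hmajor D (by lia)) fun j hj ↦ hA j (Finset.mem_insert_of_mem hj))

end Shielded

section Cycle

variable {G : SimpleGraph V} {p f : ℤ → V} {i j n : ℤ}

/-- `p` restricted to the integer interval `[i, j]` parametrises an induced path of `G`. -/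
structure IsInducedPath (G : SimpleGraph V) (p : ℤ → V) (i j : ℤ) : Prop where
  ne : ∀ ⦃a b⦄, i ≤ a → a < b → b ≤ j → p a ≠ p b
  adj : ∀ ⦃a⦄, i ≤ a → a < j → G.Adj (p a) (p (a + 1))
  not_adj : ∀ ⦃a b⦄, i ≤ a → a + 1 < b → b ≤ j → ¬ G.Adj (p a) (p b)

/-- `f` winds around an induced cycle of `G` of length `n`. Indexing by `ℤ` makes every arc of the
cycle an image of an integer interval, whatever the base point. -/
structure IsCycleParam (G : SimpleGraph V) (f : ℤ → V) (n : ℤ) : Prop where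
  three_le : 3 ≤ n
  periodic : Function.Periodic f n
  ne : ∀ ⦃a b⦄, a < b → b < a + n → f a ≠ f b
  adj : ∀ a, G.Adj (f a) (f (a + 1))
  not_adj : ∀ ⦃a b⦄, a + 1 < b → b + 1 < a + n → ¬ G.Adj (f a) (f b)

lemma connected_image_Icc (hij : i ≤ j)
    (h : ∀ t, i ≤ t → t < j → G.Adj (p t) (p (t + 1))) :
    (G.induce (p '' Set.Icc i j)).Connected := by
  induction j, hij using Int.leInduction with
  | base =>
    rw [Set.Icc_self, Set.image_singleton]
    exact ⟨Preconnected.of_subsingleton⟩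
  | succ j hij ih =>
    have hIcc : Set.Icc i (j + 1) = Set.Icc i j ∪ {j + 1} := by
      ext t; simp only [Set.mem_Icc, Set.mem_union, Set.mem_singleton_iff]; lia
    rw [hIcc, Set.image_union, Set.image_singleton]
    exact connected_induce_union (ih fun t hit htj ↦ h t hit (by lia)).preconnected
      Preconnected.of_subsingleton (Set.mem_image_of_mem p ⟨hij, le_rfl⟩) rfl (h j hij (by lia))

lemma IsInducedPath.mono {i' j' : ℤ} (h : IsInducedPath G p i j) (hi : i ≤ i') (hj : j' ≤ j) :
    IsInducedPath G p i' j' where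
  ne _ _ ha hab hb := h.ne (hi.trans ha) hab (hb.trans hj)
  adj _ ha hb := h.adj (hi.trans ha) (hb.trans_le hj)
  not_adj _ _ ha hab hb := h.not_adj (hi.trans ha) hab (hb.trans hj)

namespace IsCycleParam

lemma isInducedPath (hf : IsCycleParam G f n) (hij : j + 1 < i + n) : IsInducedPath G f i j where
  ne _ _ ha hab hb := hf.ne hab (by lia)
  adj a _ _ := hf.adj a
  not_adj _ _ ha hab hb := hf.not_adj hab (by lia)

lemma connected_arc (hf : IsCycleParam G f n) (hij : i ≤ j) :
    (G.induce (f '' Set.Icc i j)).Connected :=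
  connected_image_Icc hij fun t _ _ ↦ hf.adj t

lemma exists_mem_Ico (hf : IsCycleParam G f n) (a t : ℤ) :
    ∃ u, a ≤ u ∧ u < a + n ∧ f u = f t := by
  obtain ⟨u, hu, htu⟩ := hf.periodic.exists_mem_Ico (by linarith [hf.three_le]) t a
  exact ⟨u, hu.1, hu.2, htu.symm⟩

lemma adj_sub_one (hf : IsCycleParam G f n) (a : ℤ) : G.Adj (f (a - 1)) (f a) := by
  simpa using hf.adj (a - 1)

end IsCycleParam

/-- `v` has a neighbour in `Y`. -/
def Attaches (G : SimpleGraph V) (Y : Set V) (v : V) : Prop := ∃ y ∈ Y, G.Adj y v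

/-- A connected set disjoint from an induced cycle has neighbours at at most `s` of the vertices of
the cycle, which are counted by their parameters in one period. -/
def FewAttachments (G : SimpleGraph V) (s : ℕ) : Prop :=
  ∀ ⦃f n⦄, IsCycleParam G f n → ∀ ⦃Y : Set V⦄, (G.induce Y).Connected → (∀ t, f t ∉ Y) →
    ∀ a, {t ∈ Set.Ico a (a + n) | Attaches G Y (f t)}.ncard ≤ s

end Cycle

section Wheel

variable {G : SimpleGraph V} {f : ℤ → V} {n : ℤ} {ℓ : ℕ} {Y : Set V}

lemma wheel_adj_some_some (hℓ : 3 ≤ ℓ) {a b : ZMod ℓ} (hab : a.val < b.val) :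
    (wheel ℓ).Adj (some a) (some b) ↔ b.val = a.val + 1 ∨ a.val = 0 ∧ b.val + 1 = ℓ := by
  have : NeZero ℓ := ⟨by lia⟩
  have : Fact (1 < ℓ) := ⟨by lia⟩
  have hsucc (i : ZMod ℓ) : (i + 1).val = if i.val + 1 < ℓ then i.val + 1 else 0 := by
    rw [ZMod.val_add, ZMod.val_one]
    split_ifs with h
    · exact Nat.mod_eq_of_lt h
    · rw [show i.val + 1 = ℓ by have := ZMod.val_lt i; lia, Nat.mod_self]
  have hadj : (wheel ℓ).Adj (some a) (some b) ↔ b = a + 1 ∨ a = b + 1 := by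
    have hne : a ≠ b := fun h ↦ hab.ne (congrArg ZMod.val h)
    simp [wheel, hne]
  have ha := ZMod.val_lt a
  have hb := ZMod.val_lt b
  rw [hadj, ← (ZMod.val_injective ℓ).eq_iff, ← (ZMod.val_injective ℓ).eq_iff, hsucc, hsucc]
  split_ifs <;> lia

lemma isInducedMinor_wheel (hℓ : 3 ≤ ℓ) (hY : (G.induce Y).Connected) {X : ℕ → Set V}
    (hX : ∀ i < ℓ, (G.induce (X i)).Connected) (hXY : ∀ i < ℓ, Disjoint (X i) Y)
    (hhub : ∀ i < ℓ, ∃ u ∈ Y, ∃ v ∈ X i, G.Adj u v)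
    (hdisj : ∀ i j, i < j → j < ℓ → Disjoint (X i) (X j))
    (hrim : ∀ i j, i < j → j < ℓ →
      ((∃ u ∈ X i, ∃ v ∈ X j, G.Adj u v) ↔ j = i + 1 ∨ i = 0 ∧ j + 1 = ℓ)) :
    IsInducedMinor (wheel ℓ) G := by
  have : NeZero ℓ := ⟨by lia⟩
  have hval (a : ZMod ℓ) : a.val < ℓ := ZMod.val_lt a
  have hlt {a b : ZMod ℓ} (hab : some a ≠ some b) : a.val < b.val ∨ b.val < a.val :=
    lt_or_gt_of_ne fun h ↦ hab (congrArg some (ZMod.val_injective ℓ h))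
  have hcomm (A B : Set V) : (∃ u ∈ A, ∃ v ∈ B, G.Adj u v) ↔ ∃ u ∈ B, ∃ v ∈ A, G.Adj u v :=
    ⟨fun ⟨u, hu, v, hv, h⟩ ↦ ⟨v, hv, u, hu, h.symm⟩, fun ⟨u, hu, v, hv, h⟩ ↦ ⟨v, hv, u, hu, h.symm⟩⟩
  refine ⟨fun a ↦ a.elim Y fun i ↦ X i.val, ?_, ?_, ?_⟩
  · rintro (_ | a)
    exacts [hY, hX _ (hval a)]
  · rintro (_ | a) (_ | b) hab
    · exact absurd rfl hab
    · exact (hXY _ (hval b)).symm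
    · exact hXY _ (hval a)
    · rcases hlt hab with h | h
      exacts [hdisj _ _ h (hval b), (hdisj _ _ h (hval a)).symm]
  · rintro (_ | a) (_ | b) hab
    · exact absurd rfl hab
    · exact iff_of_true (hhub _ (hval b)) (by simp [wheel])
    · exact iff_of_true ((hcomm _ _).1 (hhub _ (hval a))) (by simp [wheel])
    · rcases hlt hab with h | h
      · exact (hrim _ _ h (hval b)).trans (wheel_adj_some_some hℓ h).symm
      · rw [hcomm, (wheel ℓ).adj_comm]
        exact (hrim _ _ h (hval a)).trans (wheel_adj_some_some hℓ h).symm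

lemma IsCycleParam.exists_adj_arc_iff (hf : IsCycleParam G f n) {T : ℕ → ℤ}
    (hT : StrictMonoOn T (Set.Iic ℓ)) (hTℓ : T ℓ = T 0 + n) {i j : ℕ} (hij : i < j) (hj : j < ℓ) :
    (∃ u ∈ f '' Set.Ico (T i) (T (i + 1)), ∃ v ∈ f '' Set.Ico (T j) (T (j + 1)), G.Adj u v) ↔
      j = i + 1 ∨ i = 0 ∧ j + 1 = ℓ := by
  have hlt {a b : ℕ} (hab : a < b) (hb : b ≤ ℓ) : T a < T b := hT (hab.le.trans hb) hb hab
  have hle {a b : ℕ} (hab : a ≤ b) (hb : b ≤ ℓ) : T a ≤ T b := hT.monotoneOn (hab.trans hb) hb hab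
  have hij' := hle (Nat.succ_le_of_lt hij) hj.le
  have h0i := hle (Nat.zero_le i) (by lia)
  have hjℓ := hle (Nat.succ_le_of_lt hj) le_rfl
  have hi := hlt i.lt_succ_self (by lia)
  have hj' := hlt j.lt_succ_self hj
  constructor
  · rintro ⟨_, ⟨a, ha, rfl⟩, _, ⟨b, hb, rfl⟩, hab⟩
    obtain ⟨ha, ha'⟩ := ha
    obtain ⟨hb, hb'⟩ := hb
    by_contra! hcon
    have hgap : T (i + 1) < T j := hlt (by lia) hj.le
    have hends : T 0 < T i ∨ T (j + 1) < T ℓ := by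
      by_cases h0 : i = 0
      · exact .inr (hlt (by lia) le_rfl)
      · exact .inl (hlt (by lia) (by lia))
    exact hf.not_adj (by lia) (by lia) hab
  · rintro (rfl | ⟨rfl, rfl⟩)
    · exact ⟨_, ⟨T (i + 1) - 1, ⟨by lia, by lia⟩, rfl⟩, _, ⟨T (i + 1), ⟨le_rfl, hj'⟩, rfl⟩,
        hf.adj_sub_one _⟩
    · refine ⟨_, ⟨T 0, ⟨le_rfl, hi⟩, rfl⟩, _, ⟨T (j + 1) - 1, ⟨by lia, by lia⟩, rfl⟩, ?_⟩
      rw [← hf.periodic (T 0), ← hTℓ]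
      exact (hf.adj_sub_one _).symm

lemma IsCycleParam.isInducedMinor_wheel (hℓ : 3 ≤ ℓ) (hf : IsCycleParam G f n)
    (hY : (G.induce Y).Connected) (hfY : ∀ t, f t ∉ Y) {T : ℕ → ℤ}
    (hT : StrictMonoOn T (Set.Iic ℓ)) (hTℓ : T ℓ = T 0 + n)
    (hatt : ∀ i < ℓ, Attaches G Y (f (T i))) : IsInducedMinor (wheel ℓ) G := by
  have hlt (i : ℕ) (hi : i < ℓ) : T i < T (i + 1) := hT hi.le hi i.lt_succ_self
  refine WheelSep.isInducedMinor_wheel hℓ hY (X := fun i ↦ f '' Set.Ico (T i) (T (i + 1)))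
    (fun i hi ↦ ?_) (fun i _ ↦ ?_) (fun i hi ↦ ?_) (fun i j hij hj ↦ ?_)
    fun i j hij hj ↦ hf.exists_adj_arc_iff hT hTℓ hij hj
  · have hIco : Set.Ico (T i) (T (i + 1)) = Set.Icc (T i) (T (i + 1) - 1) := by
      ext; simp only [Set.mem_Ico, Set.mem_Icc]; lia
    rw [hIco]
    exact hf.connected_arc (by have := hlt i hi; lia)
  · exact Set.disjoint_left.2 (Set.forall_mem_image.2 fun t _ ↦ hfY t)
  · obtain ⟨y, hy, hadj⟩ := hatt i hi
    exact ⟨y, hy, _, ⟨T i, ⟨le_rfl, hlt i hi⟩, rfl⟩, hadj⟩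
  · have h0i : T 0 ≤ T i := hT.monotoneOn (Nat.zero_le _) (by grind) (Nat.zero_le i)
    have hij' : T (i + 1) ≤ T j := hT.monotoneOn (by grind) hj.le hij
    have hjℓ : T (j + 1) ≤ T ℓ := hT.monotoneOn hj (le_refl ℓ) hj
    rw [Set.disjoint_left]
    rintro _ ⟨a, ⟨ha, ha'⟩, rfl⟩ ⟨b, ⟨hb, hb'⟩, hab⟩
    exact hf.ne (by lia) (by lia) hab.symm

lemma exists_strictMonoOn_of_le_ncard {F : Set ℤ} {a : ℤ} (hF : F ⊆ Set.Ico a (a + n))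
    (hℓ : 0 < ℓ) (hcard : ℓ ≤ F.ncard) :
    ∃ T : ℕ → ℤ, StrictMonoOn T (Set.Iic ℓ) ∧ T ℓ = T 0 + n ∧ ∀ i < ℓ, T i ∈ F := by
  have hFfin : F.Finite := (Set.finite_Ico a (a + n)).subset hF
  obtain ⟨F', hF', rfl⟩ := Finset.exists_subset_card_eq
    (hcard.trans_eq (Set.ncard_eq_toFinset_card F hFfin))
  have hF'F (t) (ht : t ∈ F') : t ∈ F := hFfin.mem_toFinset.1 (hF' ht)
  let e := F'.orderEmbOfFin rfl
  have he (i) : e i ∈ F := hF'F _ (F'.orderEmbOfFin_mem rfl i)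
  let T (i : ℕ) : ℤ := if h : i < F'.card then e ⟨i, h⟩ else e ⟨0, hℓ⟩ + n
  have hT (i : ℕ) (hi : i < F'.card) : T i = e ⟨i, hi⟩ := dif_pos hi
  have hTℓ : T F'.card = e ⟨0, hℓ⟩ + n := dif_neg (lt_irrefl _)
  refine ⟨T, fun i _ j hj hij ↦ ?_, by rw [hTℓ, hT 0 hℓ], fun i hi ↦ hT i hi ▸ he _⟩
  have hi' : i < F'.card := hij.trans_le hj
  rw [hT i hi']
  rcases (Set.mem_Iic.1 hj).lt_or_eq with hj | rfl
  · rw [hT j hj]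
    exact e.strictMono hij
  · rw [hTℓ]
    exact (hF (he _)).2.trans_le (by linarith [(hF (he ⟨0, hℓ⟩)).1])

lemma fewAttachments_of_not_isInducedMinor_wheel (hℓ : 3 ≤ ℓ)
    (hG : ¬ IsInducedMinor (wheel ℓ) G) : FewAttachments G (ℓ - 1) := by
  intro f n hf Y hY hfY a
  by_contra! hcard
  obtain ⟨T, hT, hTℓ, hTF⟩ := exists_strictMonoOn_of_le_ncard (Set.sep_subset _ _)
    (by lia) (Nat.le_of_pred_lt hcard)
  exact hG (hf.isInducedMinor_wheel hℓ hY hfY hT hTℓ fun i hi ↦ (hTF i hi).2)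

end Wheel

section CycleConstruction

variable {G : SimpleGraph V} {p g : ℤ → V} {Z : Set V} {u v : V} {i j n : ℤ}

lemma exists_isInducedPath_of_reachable (h : G.Reachable u v) (i : ℤ) :
    ∃ (p : ℤ → V) (j : ℤ), i ≤ j ∧ IsInducedPath G p i j ∧ p i = u ∧ p j = v := by
  obtain ⟨w, hw⟩ := h.exists_walk_length_eq_dist
  have htoNat {t : ℤ} (ht : i ≤ t) (ht' : t ≤ i + w.length) :
      ((t - i).toNat : ℤ) = t - i ∧ (t - i).toNat ≤ w.length := by lia
  refine ⟨fun t ↦ w.getVert (t - i).toNat, i + w.length, by lia, ⟨?_, ?_, ?_⟩, by simp, by simp⟩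
  · intro a b hia hab hb heq
    obtain ⟨ha, ha'⟩ := htoNat hia (by lia)
    obtain ⟨hb, hb'⟩ := htoNat (hia.trans hab.le) hb
    have := (w.isPath_of_length_eq_dist hw).getVert_injOn ha' hb' heq
    lia
  · intro a hia ha
    rw [show (a + 1 - i).toNat = (a - i).toNat + 1 by lia]
    exact w.adj_getVert_succ (by lia)
  · intro a b hia hab hb hadj
    have hshort := dist_le ((w.take (a - i).toNat).append (.cons hadj (w.drop (b - i).toNat)))
    rw [Walk.length_append, Walk.length_cons, Walk.take_length, Walk.drop_length] at hshort
    lia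

lemma exists_isInducedPath_through_of_connected (hZ : (G.induce Z).Connected) (huv : u ≠ v)
    (huZ : u ∉ Z) (hvZ : v ∉ Z) (hu : Attaches G Z u) (hv : Attaches G Z v) (i : ℤ) :
    ∃ (p : ℤ → V) (j : ℤ), i + 2 ≤ j ∧ IsInducedPath (G.deleteEdges {s(u, v)}) p i j ∧
      p i = u ∧ p j = v ∧ ∀ t, i < t → t < j → p t ∈ Z := by
  let H : SimpleGraph V :=
    { Adj x y := G.Adj x y ∧ (x ∈ insert u (insert v Z) ∧ y ∈ insert u (insert v Z)) ∧
        (x ∈ Z ∨ y ∈ Z)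
      symm := ⟨fun _ _ h ↦ ⟨h.1.symm, h.2.1.symm, h.2.2.symm⟩⟩
      loopless := ⟨fun _ h ↦ h.1.ne rfl⟩ }
  have hreach : H.Reachable u v := by
    obtain ⟨y, hy, hyu⟩ := hu
    obtain ⟨z, hz, hzv⟩ := hv
    have hyz : H.Reachable y z := (hZ.preconnected ⟨y, hy⟩ ⟨z, hz⟩).map
      (⟨Subtype.val, fun {a b} (hab : G.Adj a b) ↦
        ⟨hab, ⟨.inr (.inr a.2), .inr (.inr b.2)⟩, .inl a.2⟩⟩ : G.induce Z →g H)
    have hyu' : H.Adj y u := ⟨hyu, by simp [hy], .inl hy⟩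
    have hzv' : H.Adj z v := ⟨hzv, by simp [hz], .inl hz⟩
    exact hyu'.reachable.symm.trans (hyz.trans hzv'.reachable)
  obtain ⟨p, j, hij, hp, rfl, rfl⟩ := exists_isInducedPath_of_reachable hreach i
  have hHG {x y : V} (h : H.Adj x y) : (G.deleteEdges {s(p i, p j)}).Adj x y := by
    refine deleteEdges_adj.2 ⟨h.1, fun he ↦ ?_⟩
    rcases Sym2.eq_iff.1 he with ⟨rfl, rfl⟩ | ⟨rfl, rfl⟩ <;> have := h.2.2 <;> tauto
  have hmem {t : ℤ} (hit : i < t) (htj : t < j) : p t ∈ Z := by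
    rcases (hp.adj hit.le htj).2.1.1 with h | h | h
    exacts [absurd h.symm (hp.ne le_rfl hit htj.le), absurd h (hp.ne hit.le htj le_rfl), h]
  have hjne : j ≠ i := fun h ↦ huv (by rw [h])
  have hjne' : j ≠ i + 1 := by
    rintro rfl
    have := (hp.adj le_rfl (by lia)).2.2
    tauto
  refine ⟨p, j, by lia, ⟨hp.ne, fun a ha hb ↦ hHG (hp.adj ha hb), ?_⟩, rfl, rfl,
    fun t ↦ hmem⟩
  intro a b ha hab hb hadj
  obtain ⟨hadj, hne⟩ := deleteEdges_adj.1 hadj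
  have hcases {t : ℤ} (hit : i ≤ t) (htj : t ≤ j) : p t ∈ insert (p i) (insert (p j) Z) := by
    rcases hit.eq_or_lt with rfl | hit
    · exact .inl rfl
    · rcases htj.eq_or_lt with rfl | htj
      exacts [.inr (.inl rfl), .inr (.inr (hmem hit htj))]
  refine hp.not_adj ha hab hb ⟨hadj, ⟨hcases ha (by lia), hcases (by lia) hb⟩, ?_⟩
  by_contra! hZab
  have hai : a = i := by by_contra! h; exact hZab.1 (hmem (by lia) (by lia))
  have hbj : b = j := by by_contra! h; exact hZab.2 (hmem (by lia) (by lia))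
  exact hne (by rw [hai, hbj]; rfl)

lemma toIcoMod_add_eq_or (hn : 0 < n) (i a : ℤ) {d : ℤ} (hd : 0 ≤ d) (hdn : d < n) :
    toIcoMod hn i (a + d) = toIcoMod hn i a + d ∨
      toIcoMod hn i (a + d) = toIcoMod hn i a + d - n := by
  obtain ⟨ha, ha'⟩ := toIcoMod_mem_Ico hn i a
  have hdiv : toIcoMod hn i a + toIcoDiv hn i a * n = a := toIcoMod_add_toIcoDiv_zsmul hn i a
  by_cases h : toIcoMod hn i a + d < i + n
  · refine .inl ((toIcoMod_eq_iff hn).2 ⟨⟨by lia, h⟩, toIcoDiv hn i a, ?_⟩)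
    linear_combination -hdiv
  · refine .inr ((toIcoMod_eq_iff hn).2 ⟨⟨by lia, by lia⟩, toIcoDiv hn i a + 1, ?_⟩)
    linear_combination -hdiv

lemma exists_isCycleParam_of_period (hn : 3 ≤ n)
    (hne : ∀ a b, i ≤ a → a < b → b < i + n → g a ≠ g b)
    (hadj : ∀ a, i ≤ a → a + 1 < i + n → G.Adj (g a) (g (a + 1)))
    (hclose : G.Adj (g (i + n - 1)) (g i))
    (hnot_adj : ∀ a b, i ≤ a → a + 1 < b → b < i + n → i < a ∨ b < i + n - 1 →
      ¬ G.Adj (g a) (g b)) :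
    ∃ f, IsCycleParam G f n ∧ ∀ t, i ≤ t → t < i + n → f t = g t := by
  have hn0 : 0 < n := by lia
  have hmem (t : ℤ) : i ≤ toIcoMod hn0 i t ∧ toIcoMod hn0 i t < i + n := toIcoMod_mem_Ico hn0 i t
  have hdiff {a b : ℤ} (hab : a < b) (hb : b < a + n) :
      toIcoMod hn0 i b = toIcoMod hn0 i a + (b - a) ∨
        toIcoMod hn0 i b = toIcoMod hn0 i a + (b - a) - n := by
    simpa only [add_sub_cancel] using
      toIcoMod_add_eq_or hn0 i a (d := b - a) (by lia) (by lia)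
  refine ⟨fun t ↦ g (toIcoMod hn0 i t), ⟨hn, fun t ↦ by simp, fun a b hab hb ↦ ?_, fun a ↦ ?_,
    fun a b hab hb ↦ ?_⟩, fun t ht ht' ↦ congrArg g ((toIcoMod_eq_self hn0).2 ⟨ht, ht'⟩)⟩
  · obtain ⟨ha₁, ha₂⟩ := hmem a
    obtain ⟨hb₁, hb₂⟩ := hmem b
    rcases hdiff hab hb with h | h
    · exact hne _ _ ha₁ (by lia) hb₂
    · exact (hne _ _ hb₁ (by lia) ha₂).symm
  · obtain ⟨ha₁, ha₂⟩ := hmem a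
    obtain ⟨hb₁, hb₂⟩ := hmem (a + 1)
    rcases hdiff (lt_add_one a) (by lia) with h | h
    · have h' : toIcoMod hn0 i (a + 1) = toIcoMod hn0 i a + 1 := by lia
      simpa only [h'] using hadj _ ha₁ (by lia)
    · have h' : toIcoMod hn0 i a = i + n - 1 ∧ toIcoMod hn0 i (a + 1) = i := by lia
      simpa only [h'] using hclose
  · obtain ⟨ha₁, ha₂⟩ := hmem a
    obtain ⟨hb₁, hb₂⟩ := hmem b
    rcases hdiff (a := a) (b := b) (by lia) (by lia) with h | h
    · exact hnot_adj _ _ ha₁ (by lia) hb₂ (by lia)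
    · exact fun hadj ↦ hnot_adj _ _ hb₁ (by lia) ha₂ (by lia) hadj.symm

lemma IsInducedPath.not_adj_of_deleteEdges {x y : V} {q : ℤ → V} {m a b : ℤ}
    (hq : IsInducedPath (G.deleteEdges {s(x, y)}) q j m) (hx : q j = x) (hy : q m = y)
    (ha : j ≤ a) (hab : a + 1 < b) (hb : b ≤ m) (h : j < a ∨ b < m) : ¬ G.Adj (q a) (q b) := by
  refine fun hadj ↦ hq.not_adj ha hab hb (deleteEdges_adj.2 ⟨hadj, fun he ↦ ?_⟩)
  rcases Sym2.eq_iff.1 he with ⟨h₁, h₂⟩ | ⟨h₁, -⟩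
  · rcases h with h | h
    · exact hq.ne le_rfl h (by lia) (hx.trans h₁.symm)
    · exact hq.ne (by lia) h le_rfl (h₂.trans hy.symm)
  · exact hq.ne ha (by lia : a < m) le_rfl (h₁.trans hy.symm)

lemma IsInducedPath.exists_isCycleParam_of_append {q : ℤ → V} {m : ℤ} (hp : IsInducedPath G p i j)
    (hij : i < j) (hjm : j + 2 ≤ m) (hq : IsInducedPath (G.deleteEdges {s(p j, p i)}) q j m)
    (hqj : q j = p j) (hqm : q m = p i)
    (hne : ∀ a b, i ≤ a → a < j → j < b → b < m → p a ≠ q b)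
    (hnot_adj : ∀ a b, i < a → a < j → j < b → b < m → ¬ G.Adj (p a) (q b)) :
    ∃ f, IsCycleParam G f (m - i) ∧ (∀ t, i ≤ t → t ≤ j → f t = p t) ∧
      ∀ t, j < t → t < m → f t = q t := by
  have hqadj {a : ℤ} (ha : j ≤ a) (ham : a < m) : G.Adj (q a) (q (a + 1)) :=
    deleteEdges_le _ (hq.adj ha ham)
  let g (t : ℤ) : V := if t ≤ j then p t else q t
  have hgp {t : ℤ} (ht : t ≤ j) : g t = p t := if_pos ht
  have hgq {t : ℤ} (ht : j ≤ t) : g t = q t := by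
    rcases ht.eq_or_lt with rfl | ht
    exacts [(hgp le_rfl).trans hqj.symm, if_neg ht.not_ge]
  have hcases (a b : ℤ) : b ≤ j ∨ j ≤ a ∨ (a < j ∧ j < b) := by lia
  have hgne (a b : ℤ) (ha : i ≤ a) (hab : a < b) (hb : b < i + (m - i)) : g a ≠ g b := by
    rcases hcases a b with hbj | hja | ⟨haj, hjb⟩
    · simpa only [hgp hbj, hgp (hab.le.trans hbj)] using hp.ne ha hab hbj
    · simpa only [hgq hja, hgq (hja.trans hab.le)] using hq.ne hja hab (by lia)
    · simpa only [hgp haj.le, hgq hjb.le] using hne a b ha haj hjb (by lia)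
  have hgadj (a : ℤ) (ha : i ≤ a) (hb : a + 1 < i + (m - i)) : G.Adj (g a) (g (a + 1)) := by
    rcases lt_or_ge a j with haj | hja
    · simpa only [hgp haj.le, hgp (Int.add_one_le_of_lt haj)] using hp.adj ha haj
    · simpa only [hgq hja, hgq (hja.trans (lt_add_one a).le)] using hqadj hja (by lia)
  have hclose : G.Adj (g (i + (m - i) - 1)) (g i) := by
    rw [hgp hij.le, ← hqm, hgq (by lia), show m = i + (m - i) - 1 + 1 by lia]
    simpa using hqadj (a := m - 1) (by lia) (by lia)
  have hgnot_adj (a b : ℤ) (ha : i ≤ a) (hab : a + 1 < b) (hb : b < i + (m - i))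
      (h : i < a ∨ b < i + (m - i) - 1) : ¬ G.Adj (g a) (g b) := by
    rcases hcases a b with hbj | hja | ⟨haj, hjb⟩
    · simpa only [hgp hbj, hgp (by lia : a ≤ j)] using hp.not_adj ha hab hbj
    · simpa only [hgq hja, hgq (by lia : j ≤ b)] using
        hq.not_adj_of_deleteEdges hqj hqm hja hab (by lia) (.inr (by lia))
    · rw [hgp haj.le, hgq hjb.le]
      rcases ha.eq_or_lt with rfl | ha
      · rw [← hqm]
        exact fun hadj ↦ hq.not_adj_of_deleteEdges hqj hqm hjb.le (by lia) le_rfl (.inl hjb)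
          hadj.symm
      · exact hnot_adj a b ha haj hjb (by lia)
  obtain ⟨f, hf, hfg⟩ := exists_isCycleParam_of_period (by lia) hgne hgadj hclose hgnot_adj
  exact ⟨f, hf, fun t hit htj ↦ (hfg t hit (by lia)).trans (hgp htj),
    fun t hjt htm ↦ (hfg t (by lia) (by lia)).trans (hgq hjt.le)⟩

lemma IsInducedPath.exists_isCycleParam (hp : IsInducedPath G p i j) (hij : i < j)
    (hZ : (G.induce Z).Connected) (hpZ : ∀ t, i ≤ t → t ≤ j → p t ∉ Z)
    (hi : Attaches G Z (p i)) (hj : Attaches G Z (p j))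
    (hmid : ∀ t, i < t → t < j → ¬ Attaches G Z (p t)) :
    ∃ f n, IsCycleParam G f n ∧ j + 2 ≤ i + n ∧ (∀ t, i ≤ t → t ≤ j → f t = p t) ∧
      ∀ t, j < t → t < i + n → f t ∈ Z := by
  obtain ⟨q, m, hm, hq, hqj, hqm, hqZ⟩ := exists_isInducedPath_through_of_connected hZ
    (hp.ne le_rfl hij le_rfl).symm (hpZ j hij.le le_rfl) (hpZ i le_rfl hij.le) hj hi j
  obtain ⟨f, hf, hfp, hfq⟩ := hp.exists_isCycleParam_of_append hij hm hq hqj hqm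
    (fun a b ha haj hjb hbm h ↦ hpZ a ha haj.le (h ▸ hqZ b hjb hbm))
    (fun a b ha haj hjb hbm h ↦ hmid a ha haj ⟨q b, hqZ b hjb hbm, h.symm⟩)
  exact ⟨f, m - i, hf, by lia, hfp, fun t hjt ht ↦ hfq t hjt (by lia) ▸ hqZ t hjt (by lia)⟩

end CycleConstruction

section Counterexample

/-- The hypotheses refuted below: every set of at most `k` vertices leaves, once its closed
neighbourhood is removed, a component in `𝓜`, although `G` satisfies `FewAttachments G s`. -/
structure Counterexample (𝓜 : Set (Set V)) (G : SimpleGraph V) (s k : ℕ) : Prop where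
  isUpperSet : IsUpperSet 𝓜
  intersecting : 𝓜.Intersecting
  exists_isMajorComponent : ∀ D : Set V, D.ncard ≤ k → ∃ B, IsMajorComponent 𝓜 G D B
  fewAttachments : FewAttachments G s
  two_le : 2 ≤ s
  mul_self_le : s * s ≤ k

variable {G : SimpleGraph V} {𝓜 : Set (Set V)} {s k : ℕ} {f : ℤ → V} {n : ℤ} {Y : Set V}

lemma Counterexample.two_mul_le (h : Counterexample 𝓜 G s k) : 2 * s ≤ k :=
  (Nat.mul_le_mul_right s h.two_le).trans h.mul_self_le

lemma exists_next {P : ℤ → Prop} {i j : ℤ} (hij : i < j) (hj : P j) :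
    ∃ i', i < i' ∧ i' ≤ j ∧ P i' ∧ ∀ t, i < t → t < i' → ¬ P t := by
  obtain ⟨i', ⟨hi', hP⟩, hmin⟩ := Int.exists_least_of_bdd (P := fun t ↦ i < t ∧ P t)
    ⟨i, fun _ ht ↦ ht.1.le⟩ ⟨j, hij, hj⟩
  exact ⟨i', hi', hmin j ⟨hij, hj⟩, hP, fun t hit hti' hPt ↦ (hmin t ⟨hit, hPt⟩).not_gt hti'⟩

lemma exists_prev {P : ℤ → Prop} {i j : ℤ} (hij : i < j) (hi : P i) :
    ∃ j', i ≤ j' ∧ j' < j ∧ P j' ∧ ∀ t, j' < t → t < j → ¬ P t := by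
  obtain ⟨j', ⟨hj', hP⟩, hmax⟩ := Int.exists_greatest_of_bdd (P := fun t ↦ t < j ∧ P t)
    ⟨j, fun _ ht ↦ ht.1.le⟩ ⟨i, hij, hi⟩
  exact ⟨j', hmax i ⟨hij, hi⟩, hj', hP, fun t hj't htj hPt ↦ (hmax t ⟨htj, hPt⟩).not_gt hj't⟩

lemma FewAttachments.ncard_le (h : FewAttachments G s) (hf : IsCycleParam G f n)
    (hY : (G.induce Y).Connected) (hfY : ∀ t, f t ∉ Y) :
    {v ∈ Set.range f | Attaches G Y v}.ncard ≤ s := by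
  have hfin : {t ∈ Set.Ico 0 (0 + n) | Attaches G Y (f t)}.Finite :=
    (Set.finite_Ico 0 (0 + n)).subset (Set.sep_subset _ _)
  have himage : {v ∈ Set.range f | Attaches G Y v} ⊆
      f '' {t ∈ Set.Ico 0 (0 + n) | Attaches G Y (f t)} := by
    rintro _ ⟨⟨t, rfl⟩, ht⟩
    obtain ⟨u, hu, hun, hut⟩ := hf.exists_mem_Ico 0 t
    exact ⟨u, ⟨⟨hu, hun⟩, hut ▸ ht⟩, hut⟩
  exact (Set.ncard_le_ncard himage (hfin.image f)).trans
    ((Set.ncard_image_le hfin).trans (h hf hY hfY 0))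

lemma IsComponent.notMem (hY : IsComponent G (Set.range f) Y) (t : ℤ) : f t ∉ Y :=
  fun ht ↦ hY.disjoint.notMem_of_mem_left ht ⟨t, rfl⟩

lemma IsComponent.isShielded_range_or (h : Counterexample 𝓜 G s k) (hf : IsCycleParam G f n)
    (hY : IsComponent G (Set.range f) Y) :
    IsShielded 𝓜 G s (Set.range f) ∨ IsShielded 𝓜 G s (closedNbhd G Y) := by
  have hcard := h.fewAttachments.ncard_le hf hY.connected hY.notMem
  set A := {v ∈ Set.range f | Attaches G Y v}
  obtain ⟨B, hB⟩ := h.exists_isMajorComponent A (hcard.trans (by linarith [h.two_mul_le]))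
  have hBA {x : V} (hx : x ∈ B) : x ∉ A := fun hxA ↦
    hB.disjoint.notMem_of_mem_left hx (subset_closedNbhd G A hxA)
  have hmem {y x : V} (hy : y ∈ Y) (hx : x ∈ B) (hyx : G.Adj y x) : x ∈ Y :=
    (hY.mem_or_mem hy hyx).resolve_right fun hxf ↦ hBA hx ⟨hxf, y, hy, hyx⟩
  by_cases hBY : Disjoint B Y
  · refine .inr ⟨A, hcard, B, hB, Set.disjoint_left.2 ?_⟩
    have hBN {x : V} (hx : x ∈ B) : x ∉ closedNbhd G Y := by
      rintro (hxY | ⟨y, hy, hyx⟩)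
      exacts [hBY.notMem_of_mem_left hx hxY, hBY.notMem_of_mem_left hx (hmem hy hx hyx)]
    rintro x hx (hxN | ⟨y, hy | ⟨z, hz, hzy⟩, hyx⟩)
    · exact hBN hx hxN
    · exact hBN hx (mem_closedNbhd_of_adj hy hyx)
    · rcases hY.mem_or_mem hz hzy with hy | hy
      · exact hBN hx (mem_closedNbhd_of_adj hy hyx)
      · exact hB.disjoint.notMem_of_mem_left hx (mem_closedNbhd_of_adj ⟨hy, z, hz, hzy⟩ hyx)
  · obtain ⟨x, hx, hxY⟩ := Set.not_disjoint_iff.1 hBY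
    have hsub : B ⊆ Y := subset_of_connected_of_adj_mem hB.connected hx hxY
      fun _ _ haY _ hb hab ↦ hmem haY hb hab
    refine .inl ⟨A, hcard, B, hB, Set.disjoint_left.2 ?_⟩
    rintro y hy (hyf | ⟨_, ⟨t, rfl⟩, hty⟩)
    · exact hY.disjoint.notMem_of_mem_left (hsub hy) hyf
    · exact hB.disjoint.notMem_of_mem_left hy
        (mem_closedNbhd_of_adj ⟨⟨t, rfl⟩, y, hsub hy, hty.symm⟩ hty)

lemma isShielded_range_of_isShielded_range {t : ℕ} (h : Counterexample 𝓜 G s k)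
    (hf : IsCycleParam G f n) (hk : IsShielded 𝓜 G t (Set.range f)) :
    IsShielded 𝓜 G s (Set.range f) := by
  obtain ⟨D, -, B, hB, hBf⟩ := hk
  obtain ⟨Y, hY, hBY⟩ := exists_isComponent_superset hB.connected
    (hBf.mono_right (subset_closedNbhd G _))
  refine (hY.isShielded_range_or h hf).resolve_right ?_
  rintro ⟨D', -, B', hB', hB'Y⟩
  exact h.intersecting (h.isUpperSet hBY hB.mem) hB'.mem
    (hB'Y.mono_right ((subset_closedNbhd G Y).trans (subset_closedNbhd G _))).symm

lemma exists_consecutive_attachments_not_isShielded (h : Counterexample 𝓜 G s k)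
    (hf : IsCycleParam G f n) (hk : ¬ IsShielded 𝓜 G k (Set.range f))
    (hY : (G.induce Y).Connected) (hfY : ∀ t, f t ∉ Y) {a : ℤ} (ha : Attaches G Y (f a)) :
    ∃ i j, a ≤ i ∧ i < j ∧ j ≤ a + n ∧ Attaches G Y (f i) ∧ Attaches G Y (f j) ∧
      (∀ t, i < t → t < j → ¬ Attaches G Y (f t)) ∧ ¬ IsShielded 𝓜 G s (f '' Set.Icc i j) := by
  by_contra! hcon
  have hfin : {t ∈ Set.Ico a (a + n) | Attaches G Y (f t)}.Finite :=
    (Set.finite_Ico a (a + n)).subset (Set.sep_subset _ _)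
  have hcard : hfin.toFinset.card * s ≤ k := by
    rw [← Set.ncard_eq_toFinset_card _ hfin]
    exact (Nat.mul_le_mul_right s (h.fewAttachments hf hY hfY a)).trans h.mul_self_le
  have hnext (i : ℤ) (hi : i < a + n) := exists_next (P := fun t ↦ Attaches G Y (f t)) hi
    (by simpa only [hf.periodic a] using ha)
  choose! next hlt hle hatt hbetween using hnext
  have harcs : IsShielded 𝓜 G (hfin.toFinset.card * s)
      (⋃ i ∈ hfin.toFinset, f '' Set.Icc i (next i)) := by
    refine isShielded_biUnion h.intersecting _ _
      (fun D hD ↦ h.exists_isMajorComponent D (hD.trans hcard)) fun i hi ↦ ?_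
    obtain ⟨⟨hai, hian⟩, hi⟩ := hfin.mem_toFinset.1 hi
    exact hcon i (next i) hai (hlt i hian) (hle i hian) hi (hatt i hian) (hbetween i hian)
  refine hk (harcs.mono hcard ?_)
  rintro _ ⟨t, rfl⟩
  obtain ⟨u, hau, hun, hut⟩ := hf.exists_mem_Ico a t
  obtain ⟨i, hai, hiu, hi, hiu'⟩ :=
    exists_prev (P := fun t ↦ Attaches G Y (f t)) (Int.lt_add_one_of_le hau) ha
  have hian : i < a + n := by lia
  have hnext_gt : u < next i := by
    by_contra! hle
    exact hiu' (next i) (hlt i hian) (Int.lt_add_one_of_le hle) (hatt i hian)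
  exact Set.mem_biUnion (hfin.mem_toFinset.2 ⟨⟨hai, hian⟩, hi⟩)
    ⟨u, ⟨Int.le_of_lt_add_one hiu, hnext_gt.le⟩, hut⟩

end Counterexample

section Cut

variable {G : SimpleGraph V} {𝓜 : Set (Set V)} {s k : ℕ} {f : ℤ → V} {n i j : ℤ}
  {A B D W Y : Set V}

/-- `W` is the far side of a cut through `f i` and `f j`: it contains the rest of the cycle `f`,
misses the arc `f '' [i, j]`, and all its outside neighbours are among `f i` and `f j`. -/
structure IsCut (G : SimpleGraph V) (f : ℤ → V) (n i j : ℤ) (W : Set V) : Prop where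
  mem : ∀ ⦃t⦄, j < t → t < i + n → f t ∈ W
  notMem : ∀ ⦃t⦄, i ≤ t → t ≤ j → f t ∉ W
  mem_or_eq : ∀ ⦃x y⦄, x ∈ W → G.Adj x y → y ∈ W ∨ y = f i ∨ y = f j

/-- The arc `f '' [i, j]` is not `s`-shielded, and its ends cut it off from the rest of the
cycle `f`. -/
structure IsSeparatedArc (𝓜 : Set (Set V)) (G : SimpleGraph V) (s : ℕ) (f : ℤ → V)
    (n i j : ℤ) : Prop where
  lt : i < j
  lt_add : j < i + n
  not_isShielded : ¬ IsShielded 𝓜 G s (f '' Set.Icc i j)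
  exists_isCut : ∃ W, IsCut G f n i j W

lemma IsCut.subset_or_disjoint (hW : IsCut G f n i j W) (hA : (G.induce A).Connected)
    (hi : f i ∉ A) (hj : f j ∉ A) : A ⊆ W ∨ Disjoint A W := by
  refine or_iff_not_imp_right.2 fun hAW ↦ ?_
  obtain ⟨x, hxA, hxW⟩ := Set.not_disjoint_iff.1 hAW
  refine subset_of_connected_of_adj_mem hA hxA hxW fun a _ haW b hb hab ↦ ?_
  rcases hW.mem_or_eq haW hab with hbW | rfl | rfl
  exacts [hbW, absurd hb hi, absurd hb hj]

lemma IsMajorComponent.notMem_of_mem {x : V} (hB : IsMajorComponent 𝓜 G D B) (hx : x ∈ D) :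
    x ∉ B :=
  hB.disjoint.notMem_of_mem_right (subset_closedNbhd G D hx)

lemma IsCut.subset_or_disjoint_of_isMajorComponent (hW : IsCut G f n i j W)
    (hB : IsMajorComponent 𝓜 G D B) (hi : f i ∈ D) (hj : f j ∈ D) : B ⊆ W ∨ Disjoint B W :=
  hW.subset_or_disjoint hB.connected (hB.notMem_of_mem hi) (hB.notMem_of_mem hj)

lemma ncard_pair_le (u v : V) : ({u, v} : Set V).ncard ≤ 2 :=
  (Set.ncard_insert_le u {v}).trans (by rw [Set.ncard_singleton])

lemma IsCut.isShielded_arc_of_subset (hW : IsCut G f n i j W)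
    (hB : IsMajorComponent 𝓜 G {f i, f j} B) (hBW : B ⊆ W) :
    IsShielded 𝓜 G 2 (f '' Set.Icc i j) := by
  refine ⟨_, ncard_pair_le _ _, B, hB, Set.disjoint_right.2 ?_⟩
  rintro x (⟨t, ht, rfl⟩ | ⟨_, ⟨t, ht, rfl⟩, htx⟩) hx
  · exact hW.notMem ht.1 ht.2 (hBW hx)
  · refine hB.disjoint.notMem_of_mem_left hx (mem_closedNbhd_of_adj ?_ htx)
    exact (hW.mem_or_eq (hBW hx) htx.symm).resolve_left (hW.notMem ht.1 ht.2)

lemma IsCut.isShielded_arc_of_disjoint (hf : IsCycleParam G f n) (hW : IsCut G f n i j W)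
    (hB : IsMajorComponent 𝓜 G {f i, f j} B) (hBW : Disjoint B W) :
    IsShielded 𝓜 G 2 (f '' Set.Icc j (i + n)) := by
  have hcases {t : ℤ} (ht : t ∈ Set.Icc j (i + n)) : f t ∈ W ∨ f t ∈ ({f i, f j} : Set V) := by
    rcases ht.1.eq_or_lt with rfl | hjt
    · exact .inr (.inr rfl)
    rcases ht.2.eq_or_lt with rfl | htn
    · exact .inr (.inl (hf.periodic i))
    · exact .inl (hW.mem hjt htn)
  refine ⟨_, ncard_pair_le _ _, B, hB, Set.disjoint_left.2 ?_⟩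
  rintro x hx (⟨t, ht, rfl⟩ | ⟨_, ⟨t, ht, rfl⟩, htx⟩)
  · rcases hcases ht with h | h
    exacts [hBW.notMem_of_mem_left hx h, hB.notMem_of_mem h hx]
  · rcases hcases ht with h | h
    · rcases hW.mem_or_eq h htx with hxW | hx'
      exacts [hBW.notMem_of_mem_left hx hxW, hB.notMem_of_mem hx' hx]
    · exact hB.disjoint.notMem_of_mem_left hx (mem_closedNbhd_of_adj h htx)

lemma Counterexample.exists_isMajorComponent_pair (h : Counterexample 𝓜 G s k) (u v : V) :
    ∃ B, IsMajorComponent 𝓜 G {u, v} B :=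
  h.exists_isMajorComponent _ ((ncard_pair_le u v).trans
    (by linarith [h.two_le, h.two_mul_le]))

lemma Counterexample.exists_isMajorComponent_quadruple (h : Counterexample 𝓜 G s k)
    (u v w x : V) : ∃ B, IsMajorComponent 𝓜 G ({u, v} ∪ {w, x}) B :=
  h.exists_isMajorComponent _ ((Set.ncard_union_le _ _).trans
    (by linarith [ncard_pair_le u v, ncard_pair_le w x, h.two_le, h.two_mul_le]))

lemma IsSeparatedArc.disjoint_of_isMajorComponent (h : Counterexample 𝓜 G s k)
    (hT : IsSeparatedArc 𝓜 G s f n i j) (hW : IsCut G f n i j W) (hB : IsMajorComponent 𝓜 G D B)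
    (hi : f i ∈ D) (hj : f j ∈ D) : Disjoint B W := by
  obtain ⟨B', hB'⟩ := h.exists_isMajorComponent_pair (f i) (f j)
  refine Disjoint.mono_left (hB'.anti h.intersecting hB (Set.pair_subset hi hj)) ?_
  refine (hW.subset_or_disjoint_of_isMajorComponent hB' (.inl rfl) (.inr rfl)).resolve_left ?_
  exact fun hB'W ↦ hT.not_isShielded
    ((hW.isShielded_arc_of_subset hB' hB'W).mono h.two_le subset_rfl)

lemma IsSeparatedArc.isShielded_complementary_arc (h : Counterexample 𝓜 G s k)
    (hf : IsCycleParam G f n) (hT : IsSeparatedArc 𝓜 G s f n i j) :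
    IsShielded 𝓜 G 2 (f '' Set.Icc j (i + n)) := by
  obtain ⟨W, hW⟩ := hT.exists_isCut
  obtain ⟨B, hB⟩ := h.exists_isMajorComponent_pair (f i) (f j)
  exact hW.isShielded_arc_of_disjoint hf hB
    (hT.disjoint_of_isMajorComponent h hW hB (.inl rfl) (.inr rfl))

lemma IsCut.isSeparatedArc (h : Counterexample 𝓜 G s k) (hf : IsCycleParam G f n)
    (hk : ¬ IsShielded 𝓜 G k (Set.range f)) (hij : i < j) (hjn : j < i + n)
    (hW : IsCut G f n i j W) (hB : IsMajorComponent 𝓜 G D B) (hi : f i ∈ D) (hj : f j ∈ D)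
    (hBW : ¬ B ⊆ W) : IsSeparatedArc 𝓜 G s f n i j := by
  refine ⟨hij, hjn, fun harc ↦ hk ?_, W, hW⟩
  obtain ⟨B', hB'⟩ := h.exists_isMajorComponent_pair (f i) (f j)
  have hB'W : Disjoint B' W :=
    (hW.subset_or_disjoint_of_isMajorComponent hB' (.inl rfl) (.inr rfl)).resolve_left fun hsub ↦
      hBW ((hB'.anti h.intersecting hB (Set.pair_subset hi hj)).trans hsub)
  have hcard : s + 2 ≤ k := by linarith [h.two_le, h.two_mul_le]
  refine (harc.union h.intersecting (fun D hD ↦ h.exists_isMajorComponent D (hD.trans hcard))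
    (hW.isShielded_arc_of_disjoint hf hB' hB'W)).mono hcard ?_
  rw [← Set.image_union, Set.Icc_union_Icc_eq_Icc hij.le hjn.le]
  rintro _ ⟨t, rfl⟩
  obtain ⟨u, hu, hun, hut⟩ := hf.exists_mem_Ico i t
  exact ⟨u, ⟨hu, hun.le⟩, hut⟩

lemma IsSeparatedArc.add_period (hf : IsCycleParam G f n) (hT : IsSeparatedArc 𝓜 G s f n i j) :
    IsSeparatedArc 𝓜 G s f n (i + n) (j + n) := by
  obtain ⟨W, hW⟩ := hT.exists_isCut
  refine ⟨by linarith [hT.lt], by linarith [hT.lt_add], ?_, W, fun t hjt htn ↦ ?_,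
    fun t hit htj ↦ ?_, by simpa only [hf.periodic i, hf.periodic j] using hW.mem_or_eq⟩
  · simpa only [← Set.image_add_const_Icc, Set.image_image, hf.periodic _] using hT.not_isShielded
  · exact hf.periodic.sub_eq t ▸ hW.mem (by lia) (by lia)
  · exact hf.periodic.sub_eq t ▸ hW.notMem (by lia) (by lia)

lemma isCut_union {W' : Set V} {i' j' : ℤ} (hf : IsCycleParam G f n) (hW : IsCut G f n i j W)
    (hW' : IsCut G f n i' j' W') (hi : i ≤ i') (hij : i' < j) (hj : j ≤ j') (hjn : j' < i + n) :
    IsCut G f n i' j (W ∪ W') where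
  mem t hjt htn := by
    by_cases ht : t < i + n
    · exact .inl (hW.mem hjt ht)
    · exact .inr (hW'.mem (by lia) htn)
  notMem t hit htj := by
    rintro (ht | ht)
    exacts [hW.notMem (hi.trans hit) htj ht, hW'.notMem hit (htj.trans hj) ht]
  mem_or_eq x y hx hxy := by
    rcases hx with hx | hx
    · rcases hW.mem_or_eq hx hxy with hy | rfl | hy
      · exact .inl (.inl hy)
      · rcases hi.eq_or_lt with rfl | hi
        · exact .inr (.inl rfl)
        · exact .inl (.inr (hf.periodic i ▸ hW'.mem (by lia) (by lia)))
      · exact .inr (.inr hy)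
    · rcases hW'.mem_or_eq hx hxy with hy | hy | rfl
      · exact .inl (.inr hy)
      · exact .inr (.inl hy)
      · rcases hj.eq_or_lt with rfl | hj
        · exact .inr (.inr rfl)
        · exact .inl (.inl (hW.mem hj hjn))

lemma IsSeparatedArc.inter {i' j' : ℤ} (h : Counterexample 𝓜 G s k) (hf : IsCycleParam G f n)
    (hk : ¬ IsShielded 𝓜 G k (Set.range f)) (hT : IsSeparatedArc 𝓜 G s f n i j)
    (hT' : IsSeparatedArc 𝓜 G s f n i' j') (hi : i ≤ i') (hij : i' < j) (hj : j ≤ j')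
    (hjn : j' < i + n) : IsSeparatedArc 𝓜 G s f n i' j := by
  obtain ⟨W, hW⟩ := hT.exists_isCut
  obtain ⟨W', hW'⟩ := hT'.exists_isCut
  obtain ⟨B, hB⟩ := h.exists_isMajorComponent_quadruple (f i) (f j) (f i') (f j')
  have hBW : Disjoint B (W ∪ W') := Set.disjoint_union_right.2
    ⟨hT.disjoint_of_isMajorComponent h hW hB (by simp) (by simp),
      hT'.disjoint_of_isMajorComponent h hW' hB (by simp) (by simp)⟩
  refine (isCut_union hf hW hW' hi hij hj hjn).isSeparatedArc h hf hk hij (by lia) hB (by simp)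
    (by simp) fun hsub ↦ ?_
  obtain ⟨x, hx⟩ := hB.connected.nonempty
  exact hBW.notMem_of_mem_left hx (hsub hx)

lemma isSeparatedArc_add_sub_one (h : Counterexample 𝓜 G s k) (hf : IsCycleParam G f n)
    (hk : ¬ IsShielded 𝓜 G k (Set.range f)) (i : ℤ) :
    IsSeparatedArc 𝓜 G s f n i (i + n - 1) := by
  have hn := hf.three_le
  refine ⟨by lia, by lia, fun harc ↦ hk (harc.mono (by linarith [h.two_mul_le]) ?_), ∅,
    fun t _ _ ↦ by lia, fun t _ _ ↦ Set.notMem_empty _, fun x y hx ↦ hx.elim⟩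
  rintro _ ⟨t, rfl⟩
  obtain ⟨u, hu, hun, hut⟩ := hf.exists_mem_Ico i t
  exact ⟨u, ⟨hu, by lia⟩, hut⟩

lemma isCut_of_mem (hf : IsCycleParam G f n) (hij : i ≤ j) {t₀ : ℤ} (hjt₀ : j < t₀)
    (ht₀n : t₀ < i + n) (ht₀ : f t₀ ∈ W) (hnotMem : ∀ t, i ≤ t → t ≤ j → f t ∉ W)
    (hW : ∀ x ∈ W, ∀ y, G.Adj x y → y ∈ W ∨ y = f i ∨ y = f j) : IsCut G f n i j W := by
  refine ⟨fun t hjt htn ↦ ?_, hnotMem, fun x y hx ↦ hW x hx y⟩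
  refine subset_of_connected_of_adj_mem (T := W)
    (hf.connected_arc (i := j + 1) (j := i + n - 1) (by lia)) ⟨t₀, ⟨by lia, by lia⟩, rfl⟩ ht₀
    ?_ ⟨t, ⟨by lia, by lia⟩, rfl⟩
  rintro a - haW _ ⟨u, ⟨hu, hu'⟩, rfl⟩ hau
  rcases hW a haW _ hau with huW | hui | huj
  · exact huW
  · exact absurd hui.symm (hf.ne (by lia) (by lia))
  · exact absurd huj.symm (hf.ne (by lia) (by lia))

end Cut

section Detour

variable {G : SimpleGraph V} {𝓜 : Set (Set V)} {s k : ℕ} {f g : ℤ → V} {n m i j : ℤ}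
  {Y Z : Set V}

lemma IsComponent.mem_union_or_eq (hf : IsCycleParam G f n)
    (hY : IsComponent G (Set.range f) Y) (hbetween : ∀ t, i < t → t < j → ¬ Attaches G Y (f t))
    (hZ : ∀ t, j < t → t < i + n → f t ∈ Z) {x y : V} (hx : x ∈ Y) (hxy : G.Adj x y) :
    y ∈ Y ∪ Z ∨ y = f i ∨ y = f j := by
  rcases hY.mem_or_mem hx hxy with hy | ⟨t, rfl⟩
  · exact .inl (.inl hy)
  obtain ⟨u, hiu, hun, hut⟩ := hf.exists_mem_Ico i t
  rw [← hut] at hxy ⊢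
  rcases lt_trichotomy u j with huj | rfl | hju
  · rcases hiu.eq_or_lt with rfl | hiu
    · exact .inr (.inl rfl)
    · exact absurd ⟨x, hx, hxy⟩ (hbetween u hiu huj)
  · exact .inr (.inr rfl)
  · exact .inl (.inr (hZ u hju hun))

lemma isCut_of_isComponent (hf : IsCycleParam G f n) (hg : IsCycleParam G g m)
    (hgf : ∀ t, i ≤ t → t ≤ j → g t = f t) (hij : i ≤ j) (hY : IsComponent G (Set.range f) Y)
    (hZ : IsComponent G (Set.range g) Z)
    (hYbetween : ∀ t, i < t → t < j → ¬ Attaches G Y (f t))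
    (hZbetween : ∀ t, i < t → t < j → ¬ Attaches G Z (f t))
    (hgY : ∀ t, j < t → t < i + m → g t ∈ Y) (hfZ : ∀ t, j < t → t < i + n → f t ∈ Z) :
    IsCut G f n i j (Y ∪ Z) where
  mem t hjt htn := .inr (hfZ t hjt htn)
  notMem t hit htj := by
    rintro (ht | ht)
    · exact hY.notMem t ht
    · exact hZ.notMem t (hgf t hit htj ▸ ht)
  mem_or_eq x y hx hxy := by
    rcases hx with hx | hx
    · exact hY.mem_union_or_eq hf hYbetween hfZ hx hxy
    · rw [Set.union_comm, ← hgf i le_rfl hij, ← hgf j hij le_rfl]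
      exact hZ.mem_union_or_eq hg (fun t hit htj ↦ hgf t hit.le htj.le ▸ hZbetween t hit htj)
        hgY hx hxy

lemma IsSeparatedArc.of_eq_on_Icc {i' j' : ℤ} (hf : IsCycleParam G f n)
    (hg : IsCycleParam G g m) (hgf : ∀ t, i ≤ t → t ≤ j → g t = f t) (hn : j + 1 < i + n)
    (hm : j + 1 < i + m) (hi : i ≤ i') (hj : j' ≤ j) (hlt : j' - i' < j - i)
    (hT : IsSeparatedArc 𝓜 G s g m i' j') : IsSeparatedArc 𝓜 G s f n i' j' := by
  have hij := hT.lt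
  obtain ⟨W, hW⟩ := hT.exists_isCut
  have hgf' {t : ℤ} (hit : i' ≤ t) (htj : t ≤ j') : g t = f t := hgf t (by lia) (by lia)
  have himage : g '' Set.Icc i' j' = f '' Set.Icc i' j' :=
    Set.image_congr fun t ht ↦ hgf' ht.1 ht.2
  have hmem_or_eq : ∀ x ∈ W, ∀ y, G.Adj x y → y ∈ W ∨ y = f i' ∨ y = f j' := by
    rw [← hgf' le_rfl hij.le, ← hgf' hij.le le_rfl]
    exact fun x hx y ↦ hW.mem_or_eq hx
  have hnotMem (t : ℤ) (hit : i' ≤ t) (htj : t ≤ j') : f t ∉ W := hgf' hit htj ▸ hW.notMem hit htj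
  refine ⟨hij, by lia, himage ▸ hT.not_isShielded, W, ?_⟩
  by_cases hj' : j' < j
  · refine isCut_of_mem hf hij.le (lt_add_one j') (by lia) ?_ hnotMem hmem_or_eq
    exact hgf (j' + 1) (by lia) hj' ▸ hW.mem (lt_add_one j') (by lia)
  · refine isCut_of_mem hf hij.le (t₀ := i' - 1 + n) (by lia) (by lia) ?_ hnotMem hmem_or_eq
    rw [hf.periodic, ← hgf (i' - 1) (by lia) (by lia), ← hg.periodic]
    exact hW.mem (by lia) (by lia)

lemma isShielded_detour (h : Counterexample 𝓜 G s k) (hf : IsCycleParam G f n)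
    (hg : IsCycleParam G g m) (hY : IsComponent G (Set.range f) Y)
    (hk : ¬ IsShielded 𝓜 G s (Set.range f)) (hi : Attaches G Y (g i)) (hj : Attaches G Y (g j))
    (hgY : ∀ t, j < t → t < i + m → g t ∈ Y) : IsShielded 𝓜 G s (g '' Set.Icc j (i + m)) := by
  refine ((hY.isShielded_range_or h hf).resolve_left hk).mono le_rfl ?_
  rintro _ ⟨t, ⟨hjt, htm⟩, rfl⟩
  rcases hjt.eq_or_lt with rfl | hjt
  · exact .inr hj
  rcases htm.eq_or_lt with rfl | htm
  · exact .inr (hg.periodic i ▸ hi)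
  · exact subset_closedNbhd G Y (hgY t hjt htm)

lemma exists_isComponent_of_detour (hf : IsCycleParam G f n) (hg : IsCycleParam G g m)
    (hY : IsComponent G (Set.range f) Y) (hgf : ∀ t, i ≤ t → t ≤ j → g t = f t)
    (hgY : ∀ t, j < t → t < i + m → g t ∈ Y) (hn : j + 1 < i + n) :
    ∃ Z, IsComponent G (Set.range g) Z ∧ ∀ t, j < t → t < i + n → f t ∈ Z := by
  have hdisj : Disjoint (f '' Set.Icc (j + 1) (i + n - 1)) (Set.range g) := by
    refine Set.disjoint_left.2 ?_
    rintro _ ⟨t, ⟨hjt, htn⟩, rfl⟩ ⟨u₀, hu₀⟩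
    obtain ⟨u, hiu, hum, hu⟩ := hg.exists_mem_Ico i u₀
    rw [← hu] at hu₀
    rcases le_or_gt u j with huj | hju
    · exact hf.ne (by lia) (by lia) ((hgf u hiu huj).symm.trans hu₀)
    · exact hY.notMem t (hu₀ ▸ hgY u hju hum)
  obtain ⟨Z, hZ, hfZ⟩ := exists_isComponent_superset (hf.connected_arc (by lia)) hdisj
  exact ⟨Z, hZ, fun t hjt htn ↦ hfZ ⟨t, ⟨by lia, by lia⟩, rfl⟩⟩

/- Reroute the cycle through `Y` and let `Z` be the component containing the abandoned arc. If `Z`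
has no neighbour inside `f '' [i, j]`, then `Y ∪ Z` is the far side of the required cut. Otherwise
two consecutive neighbours of `Z` bound a shorter arc of the new cycle that is not shielded. -/
lemma exists_isSeparatedArc_of_isComponent (h : Counterexample 𝓜 G s k)
    (hf : IsCycleParam G f n) (hY : IsComponent G (Set.range f) Y) (hij : i < j)
    (hn : j + 1 < i + n) (hi : Attaches G Y (f i)) (hj : Attaches G Y (f j))
    (hbetween : ∀ t, i < t → t < j → ¬ Attaches G Y (f t))
    (harc : ¬ IsShielded 𝓜 G s (f '' Set.Icc i j)) :
    ∃ i' j', i ≤ i' ∧ j' ≤ j ∧ IsSeparatedArc 𝓜 G s f n i' j' := by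
  induction hd : (j - i).toNat using Nat.strong_induction_on generalizing f n i j Y with
  | _ d ih =>
  obtain ⟨g, m, hg, hm, hgf, hgY⟩ := (hf.isInducedPath hn).exists_isCycleParam hij hY.connected
    (fun t _ _ ↦ hY.notMem t) hi hj hbetween
  obtain ⟨Z, hZ, hfZ⟩ := exists_isComponent_of_detour hf hg hY hgf hgY hn
  have hgi := hgf i le_rfl hij.le
  have hgj := hgf j hij.le le_rfl
  have hZi : Attaches G Z (f i) := by
    rw [← hf.periodic i]
    exact ⟨_, hfZ (i + n - 1) (by lia) (by lia), hf.adj_sub_one _⟩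
  have hZj : Attaches G Z (f j) := ⟨_, hfZ (j + 1) (by lia) (by lia), (hf.adj j).symm⟩
  by_cases hZbetween : ∀ t, i < t → t < j → ¬ Attaches G Z (f t)
  · exact ⟨i, j, le_rfl, le_rfl, hij, by lia, harc, _,
      isCut_of_isComponent hf hg hgf hij.le hY hZ hbetween hZbetween hgY hfZ⟩
  push Not at hZbetween
  obtain ⟨t, hit, htj, ht⟩ := hZbetween
  have hks : ¬ IsShielded 𝓜 G k (Set.range g) := fun hk ↦ harc <|
    (isShielded_range_of_isShielded_range h hg hk).mono le_rfl <| by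
      rintro _ ⟨u, hu, rfl⟩
      exact ⟨u, hgf u hu.1 hu.2⟩
  obtain ⟨a, b, hia, hab, hbm, ha, hb, hab', harc'⟩ :=
    exists_consecutive_attachments_not_isShielded h hg hks hZ.connected hZ.notMem (hgi ▸ hZi)
  rcases le_or_gt b j with hbj | hjb
  · have hlt : b - a < j - i := by
      by_contra! hle
      exact hab' t (by lia) (by lia) (hgf t hit.le htj.le ▸ ht)
    obtain ⟨i', j', hi', hj', hT⟩ := ih _ (by lia) hg hZ hab (by lia) ha hb hab' harc' rfl
    exact ⟨i', j', by lia, by lia, hT.of_eq_on_Icc hf hg hgf hn (by lia) (by lia) (by lia) (by lia)⟩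
  · have hja : j ≤ a := by
      by_contra! haj
      exact hab' j haj hjb (hgj ▸ hZj)
    have hdetour := isShielded_detour h hf hg hY
      (fun hs ↦ harc (hs.mono le_rfl (Set.image_subset_range f _))) (hgi ▸ hi) (hgj ▸ hj) hgY
    exact absurd (hdetour.mono le_rfl (Set.image_mono (Set.Icc_subset_Icc hja hbm))) harc'

end Detour

section ExtremalPair

variable {G : SimpleGraph V} {𝓜 : Set (Set V)} {s k : ℕ} {f : ℤ → V} {n i j a b c d t : ℤ}
  {B D W Y : Set V}

lemma IsCut.not_attaches_of_attaches (hf : IsCycleParam G f n) (hW : IsCut G f n i j W)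
    (hY : IsComponent G (Set.range f) Y) {q : ℤ} (hjq : j < q) (hqn : q < i + n)
    (hq : Attaches G Y (f q)) (hit : i < t) (htj : t < j) : ¬ Attaches G Y (f t) := by
  rintro ⟨z, hz, hzt⟩
  obtain ⟨y, hy, hyq⟩ := hq
  have hYW : Y ⊆ W := by
    refine (hW.subset_or_disjoint hY.connected (hY.notMem i) (hY.notMem j)).resolve_right
      fun hdisj ↦ ?_
    rcases hW.mem_or_eq (hW.mem hjq hqn) hyq.symm with hyW | rfl | rfl
    exacts [hdisj.notMem_of_mem_left hy hyW, hY.notMem i hy, hY.notMem j hy]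
  rcases hW.mem_or_eq (hYW hz) hzt with htW | hti | htj'
  · exact hW.notMem hit.le htj.le htW
  · exact hf.ne hit (by lia) hti.symm
  · exact hf.ne htj (by lia) htj'

/-- The extremal configuration of the uncrossing argument: `[c, d]` is a shortest separated arc of
the cycle, and `[a, b] ⊆ [c, d]` is a longest arc with `[b, a + n]`, the rest of the cycle,
separated. -/
structure IsExtremalPair (𝓜 : Set (Set V)) (G : SimpleGraph V) (s : ℕ) (f : ℤ → V)
    (n c d a b : ℤ) : Prop where
  isSeparatedArc : IsSeparatedArc 𝓜 G s f n c d
  min : ∀ ⦃i j⦄, IsSeparatedArc 𝓜 G s f n i j → d - c ≤ j - i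
  left_le : c ≤ a
  lt : a < b
  le_right : b ≤ d
  isSeparatedArc_compl : IsSeparatedArc 𝓜 G s f n b (a + n)
  max : ∀ ⦃a' b'⦄, c ≤ a' → a' < b' → b' ≤ d → IsSeparatedArc 𝓜 G s f n b' (a' + n) →
    b' - a' ≤ b - a

lemma IsExtremalPair.not_isSeparatedArc (h : Counterexample 𝓜 G s k) (hf : IsCycleParam G f n)
    (hk : ¬ IsShielded 𝓜 G k (Set.range f)) (hE : IsExtremalPair 𝓜 G s f n c d a b)
    (hi : b ≤ i) (hj : j < a + n) : ¬ IsSeparatedArc 𝓜 G s f n i j := by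
  intro hT
  have hca := hE.left_le
  have hab := hE.lt
  have hbd := hE.le_right
  have hdn := hE.isSeparatedArc.lt_add
  have hlen := hE.min hT
  have hrest (hdi : d ≤ i) (hjc : j ≤ c + n) : False := hT.not_isShielded <|
    (hE.isSeparatedArc.isShielded_complementary_arc h hf).mono h.two_le
      (Set.image_mono (Set.Icc_subset_Icc hdi hjc))
  rcases le_or_gt i d with hid | hdi
  · rcases le_or_gt (c + n) j with hcj | hjc
    · have := hE.max (a' := j - n) (by lia) (by lia) hid (by rwa [sub_add_cancel])
      lia
    · rcases hid.eq_or_lt with rfl | hid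
      · exact hrest le_rfl hjc.le
      · have := hE.min (hE.isSeparatedArc.inter h hf hk hT (by lia) hid (by lia) hjc)
        lia
  · rcases le_or_gt j (c + n) with hjc | hcj
    · exact hrest hdi.le hjc
    · have := hE.min (hT.inter h hf hk (hE.isSeparatedArc.add_period hf) (by lia) hcj (by lia)
        (by lia))
      lia

lemma IsExtremalPair.not_attaches (h : Counterexample 𝓜 G s k) (hf : IsCycleParam G f n)
    (hk : ¬ IsShielded 𝓜 G k (Set.range f)) (hE : IsExtremalPair 𝓜 G s f n c d a b)
    (hY : IsComponent G (Set.range f) Y) (hct : c < t) (hta : t < a) (ht : Attaches G Y (f t))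
    {q : ℤ} (haq : a < q) (hqn : q < c + n) : ¬ Attaches G Y (f q) := by
  intro hq
  have hab := hE.lt
  have hbd := hE.le_right
  have hdn := hE.isSeparatedArc.lt_add
  obtain ⟨W, hW⟩ := hE.isSeparatedArc.exists_isCut
  obtain ⟨W', hW'⟩ := hE.isSeparatedArc_compl.exists_isCut
  have hinner {r : ℤ} (har : a < r) (hrb : r < b) : ¬ Attaches G Y (f r) := fun hr ↦
    hW'.not_attaches_of_attaches hf hY (q := r + n) (t := t + n) (by lia) (by lia)
      ((hf.periodic r).symm ▸ hr) (by lia) (by lia) ((hf.periodic t).symm ▸ ht)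
  have houter {r : ℤ} (hdr : d < r) (hrn : r < c + n) : ¬ Attaches G Y (f r) := fun hr ↦
    hW.not_attaches_of_attaches hf hY hdr hrn hr hct (by lia) ht
  have hbq : b ≤ q := by
    by_contra! hqb
    exact hinner haq hqb hq
  obtain ⟨i, j, hti, hij, hjn, hi, hj, hbetween, harc⟩ :=
    exists_consecutive_attachments_not_isShielded h hf hk hY.connected hY.notMem ht
  have hsub (hn : j + 1 < i + n) :=
    exists_isSeparatedArc_of_isComponent h hf hY hij hn hi hj hbetween harc
  have hlen : d - c ≤ j - i := by
    by_contra! hlt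
    obtain ⟨i', j', hi', hj', hT⟩ := hsub (by lia)
    have := hE.min hT
    lia
  have hcj : c + n ≤ j := by
    by_contra! hjc
    exact houter (by lia) hjc hj
  have hqi : q ≤ i := by
    by_contra! hiq
    exact hbetween q hiq (by lia) hq
  obtain ⟨i', j', hi', hj', hT⟩ := hsub (by lia)
  exact hE.not_isSeparatedArc h hf hk (by lia) (by lia) hT

/-- The arc `f '' [i, j]` together with all components of the rest of the graph that have a
neighbour in its interior. -/
def arcHull (G : SimpleGraph V) (f : ℤ → V) (i j : ℤ) : Set V :=
  f '' Set.Icc i j ∪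
    {z | ∃ Y, IsComponent G (Set.range f) Y ∧ z ∈ Y ∧ ∃ t, i < t ∧ t < j ∧ Attaches G Y (f t)}

lemma mem_arcHull_of_adj (hf : IsCycleParam G f n) (hit : i < t) (htj : t < j)
    {z : V} (htz : G.Adj (f t) z) : z ∈ arcHull G f i j := by
  by_cases hz : z ∈ Set.range f
  · obtain ⟨q₀, rfl⟩ := hz
    obtain ⟨q, hiq, hqn, hq⟩ := hf.exists_mem_Ico i q₀
    rw [← hq] at htz ⊢
    rcases le_or_gt q j with hqj | hjq
    · exact .inl ⟨q, ⟨hiq, hqj⟩, rfl⟩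
    · exact absurd htz (hf.not_adj (by lia) (by lia))
  · obtain ⟨Y, hY, hzY⟩ := exists_isComponent_superset (G := G) (A := {z})
      ⟨Preconnected.of_subsingleton⟩ (Set.disjoint_singleton_left.2 hz)
    exact .inr ⟨Y, hY, hzY rfl, t, hit, htj, z, hzY rfl, htz.symm⟩

lemma isCut_compl_arcHull (hf : IsCycleParam G f n) (hjn : j < i + n)
    (hsep : ∀ Y, IsComponent G (Set.range f) Y → ∀ t q, i < t → t < j → j < q → q < i + n →
      Attaches G Y (f t) → ¬ Attaches G Y (f q)) :
    IsCut G f n i j (arcHull G f i j)ᶜ where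
  mem t hjt htn := by
    rintro (⟨r, hr, hrt⟩ | ⟨Y, hY, htY, -⟩)
    · exact hf.ne (hr.2.trans_lt hjt) (by linarith [hr.1]) hrt
    · exact hY.notMem t htY
  notMem t hit htj ht := ht (.inl ⟨t, ⟨hit, htj⟩, rfl⟩)
  mem_or_eq x y hx hxy := by
    refine or_iff_not_imp_left.2 fun hy ↦ ?_
    rcases not_not.1 hy with ⟨r, ⟨hir, hrj⟩, rfl⟩ | ⟨Y, hY, hyY, t, hit, htj, ht⟩
    · rcases hir.eq_or_lt with rfl | hir
      · exact .inl rfl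
      rcases hrj.eq_or_lt with rfl | hrj
      · exact .inr rfl
      exact absurd (mem_arcHull_of_adj hf hir hrj hxy.symm) hx
    · rcases hY.mem_or_mem hyY hxy.symm with hxY | ⟨q₀, rfl⟩
      · exact absurd (.inr ⟨Y, hY, hxY, t, hit, htj, ht⟩) hx
      obtain ⟨q, hiq, hqn, hq⟩ := hf.exists_mem_Ico i q₀
      rw [← hq] at hx hxy
      rcases le_or_gt q j with hqj | hjq
      · exact absurd (.inl ⟨q, ⟨hiq, hqj⟩, rfl⟩) hx
      · exact absurd ⟨y, hyY, hxy.symm⟩ (hsep Y hY t q hit htj hjq hqn ht)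

lemma IsExtremalPair.notMem_closedNbhd (h : Counterexample 𝓜 G s k) (hf : IsCycleParam G f n)
    (hk : ¬ IsShielded 𝓜 G k (Set.range f)) (hE : IsExtremalPair 𝓜 G s f n c d a b)
    (hB : IsMajorComponent 𝓜 G D B) (hc : f c ∈ D) (ha : f a ∈ D) (hct : c < t) (hta : t < a) :
    f t ∉ closedNbhd G B := by
  intro ht
  have hab := hE.lt
  have hbd := hE.le_right
  have han : a < c + n := by linarith [hE.isSeparatedArc.lt_add]
  have hcut : IsCut G f n c a (arcHull G f c a)ᶜ := isCut_compl_arcHull hf han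
    fun Y hY t q hct hta haq hqn ht ↦ hE.not_attaches h hf hk hY hct hta ht haq hqn
  have hmeet : ¬ B ⊆ (arcHull G f c a)ᶜ := by
    intro hsub
    rcases ht with ht | ⟨x, hx, hxt⟩
    · exact hsub ht (.inl ⟨t, ⟨hct.le, hta.le⟩, rfl⟩)
    · exact hsub hx (mem_arcHull_of_adj hf hct hta hxt.symm)
  have := hE.min (hcut.isSeparatedArc h hf hk (hct.trans hta) han hB hc ha hmeet)
  lia

lemma IsCycleParam.comp_neg (hf : IsCycleParam G f n) : IsCycleParam G (fun t ↦ f (-t)) n where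
  three_le := hf.three_le
  periodic t := by simpa only [neg_add, ← sub_eq_add_neg] using hf.periodic.sub_eq (-t)
  ne _ _ hab hb := (hf.ne (neg_lt_neg hab) (by lia)).symm
  adj t := by simpa only [neg_add, neg_add_cancel_right] using (hf.adj (-t + -1)).symm
  not_adj _ _ hab hb h := hf.not_adj (by lia) (by lia) h.symm

lemma IsSeparatedArc.comp_neg (hf : IsCycleParam G f n) (hT : IsSeparatedArc 𝓜 G s f n i j) :
    IsSeparatedArc 𝓜 G s (fun t ↦ f (-t)) n (-j) (-i) := by
  obtain ⟨W, hW⟩ := hT.exists_isCut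
  refine ⟨neg_lt_neg hT.lt, by linarith [hT.lt_add], ?_, W, fun t hit htn ↦ ?_,
    fun t hjt hti ↦ hW.notMem (by lia) (by lia), fun x y hx hxy ↦ ?_⟩
  · have himage : (fun t ↦ f (-t)) '' Set.Icc (-j) (-i) = f '' Set.Icc i j := by
      rw [← Set.image_image f Neg.neg, Set.image_neg_Icc, neg_neg, neg_neg]
    exact himage ▸ hT.not_isShielded
  · exact hf.periodic (-t) ▸ hW.mem (by lia) (by lia)
  · simpa only [neg_neg, or_comm (a := y = f j)] using hW.mem_or_eq hx hxy

lemma IsSeparatedArc.of_comp_neg (hf : IsCycleParam G f n)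
    (hT : IsSeparatedArc 𝓜 G s (fun t ↦ f (-t)) n i j) :
    IsSeparatedArc 𝓜 G s f n (-j) (-i) := by
  simpa only [neg_neg] using hT.comp_neg hf.comp_neg

lemma IsExtremalPair.comp_neg (hf : IsCycleParam G f n)
    (hE : IsExtremalPair 𝓜 G s f n c d a b) :
    IsExtremalPair 𝓜 G s (fun t ↦ f (-t)) n (-d) (-c) (-b) (-a) where
  isSeparatedArc := hE.isSeparatedArc.comp_neg hf
  min i j hT := by linarith [hE.min (hT.of_comp_neg hf)]
  left_le := neg_le_neg hE.le_right
  lt := neg_lt_neg hE.lt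
  le_right := neg_le_neg hE.left_le
  isSeparatedArc_compl := by
    have hT := (hE.isSeparatedArc_compl.comp_neg hf).add_period hf.comp_neg
    rwa [neg_add, neg_add_cancel_right] at hT
  max a' b' ha hab hb hT := by
    have hT' := (hT.of_comp_neg hf).add_period hf
    rw [neg_add, neg_add_cancel_right] at hT'
    linarith [hE.max (by lia) (neg_lt_neg hab) (by lia) hT']

lemma exists_isExtremalPair (h : Counterexample 𝓜 G s k) (hf : IsCycleParam G f n)
    (hk : ¬ IsShielded 𝓜 G k (Set.range f)) :
    ∃ c d a b, IsExtremalPair 𝓜 G s f n c d a b := by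
  obtain ⟨m, ⟨c, hc⟩, hmin⟩ :=
    Int.exists_least_of_bdd (P := fun m ↦ ∃ c, IsSeparatedArc 𝓜 G s f n c (c + m))
      ⟨0, fun m ⟨c, hc⟩ ↦ by linarith [hc.lt]⟩
      ⟨n - 1, 0, by simpa only [add_sub_assoc] using isSeparatedArc_add_sub_one h hf hk 0⟩
  obtain ⟨e, ⟨he, a, hca, had, ha⟩, hmax⟩ :=
    Int.exists_greatest_of_bdd (P := fun e ↦ 0 < e ∧
        ∃ a, c ≤ a ∧ a + e ≤ c + m ∧ IsSeparatedArc 𝓜 G s f n (a + e) (a + n))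
      ⟨m, fun e ⟨_, a, hca, had, _⟩ ↦ by linarith⟩
      ⟨1, one_pos, c, le_rfl, by linarith [hc.lt], by
        simpa only [add_right_comm, add_sub_cancel_right] using
          isSeparatedArc_add_sub_one h hf hk (c + 1)⟩
  refine ⟨c, c + m, a, a + e, hc, fun i j hT ↦ ?_, hca, by lia, had, ha,
    fun a' b' hca' hab' hbd' hT ↦ ?_⟩
  · linarith [hmin (j - i) ⟨i, by rwa [add_sub_cancel]⟩]
  · linarith [hmax (b' - a') ⟨by lia, a', hca', by lia, by rwa [add_sub_cancel]⟩]

lemma IsSeparatedArc.notMem_closedNbhd (h : Counterexample 𝓜 G s k)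
    (hT : IsSeparatedArc 𝓜 G s f n i j) (hB : IsMajorComponent 𝓜 G D B) (hi : f i ∈ D)
    (hj : f j ∈ D) (hjt : j < t) (htn : t < i + n) : f t ∉ closedNbhd G B := by
  obtain ⟨W, hW⟩ := hT.exists_isCut
  have hBW := hT.disjoint_of_isMajorComponent h hW hB hi hj
  have ht := hW.mem hjt htn
  rintro (htB | ⟨x, hx, hxt⟩)
  · exact hBW.notMem_of_mem_left htB ht
  · rcases hW.mem_or_eq ht hxt.symm with hxW | rfl | rfl
    exacts [hBW.notMem_of_mem_left hx hxW, hB.notMem_of_mem hi hx, hB.notMem_of_mem hj hx]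

lemma isShielded_range (h : Counterexample 𝓜 G s k) (hf : IsCycleParam G f n) :
    IsShielded 𝓜 G s (Set.range f) := by
  by_contra hs
  have hk : ¬ IsShielded 𝓜 G k (Set.range f) := mt (isShielded_range_of_isShielded_range h hf) hs
  obtain ⟨c, d, a, b, hE⟩ := exists_isExtremalPair h hf hk
  obtain ⟨B, hB⟩ := h.exists_isMajorComponent_quadruple (f c) (f d) (f a) (f b)
  set D : Set V := {f c, f d} ∪ {f a, f b}
  have hD : D.ncard ≤ k := (Set.ncard_union_le _ _).trans
    (by linarith [ncard_pair_le (f c) (f d), ncard_pair_le (f a) (f b), h.two_le, h.two_mul_le])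
  have hDB {x : V} (hx : x ∈ D) : x ∉ closedNbhd G B :=
    (disjoint_closedNbhd_comm.1 hB.disjoint).notMem_of_mem_left hx
  refine hk ⟨D, hD, B, hB, disjoint_closedNbhd_comm.1 (Set.disjoint_left.2 ?_)⟩
  rintro _ ⟨t₀, rfl⟩
  obtain ⟨t, hct, htn, ht⟩ := hf.exists_mem_Ico c t₀
  rw [← ht]
  rcases hct.eq_or_lt with rfl | hct
  · exact hDB (by simp [D])
  rcases lt_trichotomy t a with hta | rfl | hat
  · exact hE.notMem_closedNbhd h hf hk hB (by simp [D]) (by simp [D]) hct hta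
  · exact hDB (by simp [D])
  rcases lt_trichotomy t b with htb | rfl | hbt
  · exact hf.periodic t ▸ hE.isSeparatedArc_compl.notMem_closedNbhd h hB (by simp [D])
      (by simp [D, hf.periodic a]) (add_lt_add_left hat n) (add_lt_add_left htb n)
  · exact hDB (by simp [D])
  rcases lt_trichotomy t d with htd | rfl | hdt
  · have hrange : Set.range (fun t ↦ f (-t)) = Set.range f := neg_surjective.range_comp f
    have ht' := (hE.comp_neg hf).notMem_closedNbhd h hf.comp_neg (hrange ▸ hk) hB
      (by simp [D]) (by simp [D]) (neg_lt_neg htd) (neg_lt_neg hbt)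
    rwa [neg_neg] at ht'
  · exact hDB (by simp [D])
  · exact hE.isSeparatedArc.notMem_closedNbhd h hB (by simp [D]) (by simp [D]) hdt htn

end ExtremalPair

section Domination

variable {G : SimpleGraph V} {𝓜 : Set (Set V)} {s k : ℕ} {p : ℤ → V} {i j : ℤ} {B B' : Set V}

lemma IsMajorComponent.subset_of_inter_subset (h𝓜 : 𝓜.Intersecting)
    (hB' : IsMajorComponent 𝓜 G D B') (hB : B ∈ 𝓜) (h : B' ∩ closedNbhd G B ⊆ B) : B' ⊆ B := by
  obtain ⟨x, hx, hx'⟩ := Set.not_disjoint_iff.1 (h𝓜 hB hB'.mem)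
  exact subset_of_connected_of_adj_mem hB'.connected hx' hx fun a _ haB b hb hab ↦
    h ⟨hb, mem_closedNbhd_of_adj haB hab⟩

lemma IsInducedPath.exists_isCycleParam_of_private (hp : IsInducedPath G p i j) (hij : i < j)
    (hB : (G.induce B).Connected) (hpB : ∀ t, i ≤ t → t ≤ j → p t ∉ closedNbhd G B) {a b : V}
    (ha : a ∈ closedNbhd G B) (hia : G.Adj (p i) a) (hta : ∀ t, i < t → t ≤ j → ¬ G.Adj (p t) a)
    (hb : b ∈ closedNbhd G B) (hjb : G.Adj (p j) b) (htb : ∀ t, i ≤ t → t < j → ¬ G.Adj (p t) b) :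
    ∃ f n, IsCycleParam G f n ∧ p '' Set.Icc i j ⊆ Set.range f := by
  have hinsert {Z : Set V} {x : V} (hZ : (G.induce Z).Connected) (hBZ : B ⊆ Z)
      (hx : x ∈ closedNbhd G B) : (G.induce (insert x Z)).Connected := by
    rcases hx with hx | ⟨y, hy, hyx⟩
    · rwa [Set.insert_eq_of_mem (hBZ hx)]
    · rw [← Set.union_singleton]
      exact connected_induce_union hZ.preconnected Preconnected.of_subsingleton (hBZ hy) rfl hyx
  have hZ := hinsert (hinsert hB subset_rfl hb) (Set.subset_insert b B) ha
  obtain ⟨f, n, hf, -, hfp, -⟩ := hp.exists_isCycleParam hij hZ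
    (by
      rintro t hit htj (h | h | h)
      exacts [hpB t hit htj (h ▸ ha), hpB t hit htj (h ▸ hb),
        hpB t hit htj (subset_closedNbhd G B h)])
    ⟨a, by simp, hia.symm⟩ ⟨b, by simp, hjb.symm⟩
    (by
      rintro t hit htj ⟨z, rfl | rfl | hz, hzt⟩
      exacts [hta t hit htj.le hzt.symm, htb t hit.le htj hzt.symm,
        hpB t hit.le htj.le (mem_closedNbhd_of_adj hz hzt)])
  refine ⟨f, n, hf, ?_⟩
  rintro _ ⟨t, ⟨hit, htj⟩, rfl⟩
  exact ⟨t, hfp t hit htj⟩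

/-- Some set of at most `s` vertices forces the component in `𝓜` left by removing its closed
neighbourhood to lie inside `B`. -/
def IsConfined (𝓜 : Set (Set V)) (G : SimpleGraph V) (s : ℕ) (B : Set V) : Prop :=
  ∃ D : Set V, D.ncard ≤ s ∧ ∀ B', IsMajorComponent 𝓜 G D B' → B' ⊆ B

lemma IsInducedPath.isConfined_of_private (h : Counterexample 𝓜 G s k)
    (hp : IsInducedPath G p i j) (hij : i < j) (hB : (G.induce B).Connected) (hB𝓜 : B ∈ 𝓜)
    (hpB : ∀ t, i ≤ t → t ≤ j → p t ∉ closedNbhd G B)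
    (hdom : closedNbhd G B \ B ⊆ closedNbhd G (p '' Set.Icc i j))
    (htail : ¬ closedNbhd G B \ B ⊆ closedNbhd G (p '' Set.Icc (i + 1) j))
    (hinit : ¬ closedNbhd G B \ B ⊆ closedNbhd G (p '' Set.Icc i (j - 1))) :
    IsConfined 𝓜 G s B := by
  have hadj {y : V} (hy : y ∈ closedNbhd G B \ B) : ∃ t, i ≤ t ∧ t ≤ j ∧ G.Adj (p t) y := by
    obtain ⟨t, ⟨hit, htj⟩, rfl⟩ | ⟨_, ⟨t, ⟨hit, htj⟩, rfl⟩, hty⟩ := hdom hy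
    · exact absurd hy.1 (hpB t hit htj)
    · exact ⟨t, hit, htj, hty⟩
  obtain ⟨a, haB, ha⟩ := Set.not_subset.1 htail
  obtain ⟨b, hbB, hb⟩ := Set.not_subset.1 hinit
  have hta (t : ℤ) (hit : i < t) (htj : t ≤ j) : ¬ G.Adj (p t) a := fun hadj ↦
    ha (mem_closedNbhd_of_adj (Set.mem_image_of_mem p ⟨hit, htj⟩) hadj)
  have htb (t : ℤ) (hit : i ≤ t) (htj : t < j) : ¬ G.Adj (p t) b := fun hadj ↦
    hb (mem_closedNbhd_of_adj (Set.mem_image_of_mem p ⟨hit, by lia⟩) hadj)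
  have hia : G.Adj (p i) a := by
    obtain ⟨t, hit, htj, ht⟩ := hadj haB
    obtain rfl | hit := hit.eq_or_lt
    exacts [ht, absurd ht (hta t hit htj)]
  have hjb : G.Adj (p j) b := by
    obtain ⟨t, hit, htj, ht⟩ := hadj hbB
    obtain rfl | htj := htj.eq_or_lt
    exacts [ht, absurd ht (htb t hit htj)]
  obtain ⟨f, n, hf, hpf⟩ :=
    hp.exists_isCycleParam_of_private hij hB hpB haB.1 hia hta hbB.1 hjb htb
  obtain ⟨D, hD, C, hC, hCf⟩ := isShielded_range h hf
  refine ⟨D, hD, fun B' hB' ↦ hB'.subset_of_inter_subset h.intersecting hB𝓜 ?_⟩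
  rintro y ⟨hyB', hyB⟩
  by_contra hy
  exact hCf.notMem_of_mem_left (hC.anti h.intersecting hB' subset_rfl hyB')
    (closedNbhd_mono hpf (hdom ⟨hyB, hy⟩))

/- Shrink the path while it still dominates the boundary of `B`. If it does not shrink to a single
vertex, each end has a boundary vertex of its own, and these two close it up through `B` to a
cycle, which is shielded. -/
lemma IsInducedPath.isConfined (h : Counterexample 𝓜 G s k) (m : ℕ)
    (hp : IsInducedPath G p i (i + m)) (hB : (G.induce B).Connected) (hB𝓜 : B ∈ 𝓜)
    (hpB : ∀ t, i ≤ t → t ≤ i + m → p t ∉ closedNbhd G B)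
    (hdom : closedNbhd G B \ B ⊆ closedNbhd G (p '' Set.Icc i (i + m))) :
    IsConfined 𝓜 G s B := by
  induction m generalizing i with
  | zero =>
    refine ⟨{p i}, by simpa using one_le_two.trans h.two_le, fun B' hB' ↦
      hB'.subset_of_inter_subset h.intersecting hB𝓜 fun y ⟨hyB', hyB⟩ ↦ ?_⟩
    by_contra hy
    exact hB'.disjoint.notMem_of_mem_left hyB' (by simpa using hdom ⟨hyB, hy⟩)
  | succ m ih =>
    by_cases htail : closedNbhd G B \ B ⊆ closedNbhd G (p '' Set.Icc (i + 1) (i + 1 + m))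
    · exact ih (hp.mono (by lia) (by lia)) (fun t _ _ ↦ hpB t (by lia) (by lia)) htail
    by_cases hinit : closedNbhd G B \ B ⊆ closedNbhd G (p '' Set.Icc i (i + m))
    · exact ih (hp.mono le_rfl (by lia)) (fun t _ _ ↦ hpB t (by lia) (by lia)) hinit
    have hj : i + 1 + m = i + ((m + 1 : ℕ) : ℤ) := by lia
    have hj' : i + m = i + ((m + 1 : ℕ) : ℤ) - 1 := by lia
    rw [hj] at htail
    rw [hj'] at hinit
    exact hp.isConfined_of_private h (by lia) hB hB𝓜 hpB hdom htail hinit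

lemma IsMajorComponent.isConfined_of_isInducedPath (h : Counterexample 𝓜 G s k)
    (hp : IsInducedPath G p i j) (hij : i ≤ j) (hB : IsMajorComponent 𝓜 G (p '' Set.Icc i j) B) :
    IsConfined 𝓜 G s B := by
  obtain ⟨m, rfl⟩ := Int.le.dest hij
  refine hp.isConfined h m hB.connected hB.mem (fun t hit htm ↦
    (disjoint_closedNbhd_comm.1 hB.disjoint).notMem_of_mem_left ⟨t, ⟨hit, htm⟩, rfl⟩) ?_
  rintro y ⟨hyB | ⟨x, hx, hxy⟩, hy⟩
  exacts [absurd hyB hy, (hB.mem_or_mem hx hxy).resolve_left hy]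

end Domination

section Gyarfas

variable {G : SimpleGraph V} {𝓜 : Set (Set V)} {s k : ℕ} {p : ℤ → V} {r : ℤ} {B B' : Set V}

lemma IsInducedPath.update {i j : ℤ} {w : V} (hp : IsInducedPath G p i j) (hw : G.Adj (p j) w)
    (hpw : ∀ t, i ≤ t → t < j → p t ≠ w ∧ ¬ G.Adj (p t) w) :
    IsInducedPath G (Function.update p (j + 1) w) i (j + 1) := by
  have hup {t : ℤ} (ht : t ≤ j) : Function.update p (j + 1) w t = p t :=
    Function.update_of_ne (by lia) _ _
  refine ⟨fun a b ha hab hb ↦ ?_, fun a ha haj ↦ ?_, fun a b ha hab hb ↦ ?_⟩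
  · obtain rfl | hb := hb.eq_or_lt
    · rw [hup (by lia), Function.update_self]
      obtain rfl | haj := (show a ≤ j by lia).eq_or_lt
      exacts [hw.ne, (hpw a ha haj).1]
    · rw [hup (by lia), hup (by lia)]
      exact hp.ne ha hab (by lia)
  · obtain rfl | haj := (show a ≤ j by lia).eq_or_lt
    · rwa [hup le_rfl, Function.update_self]
    · rw [hup (by lia), hup (by lia)]
      exact hp.adj ha haj
  · obtain rfl | hb := hb.eq_or_lt
    · rw [hup (by lia), Function.update_self]
      exact (hpw a ha (by lia)).2
    · rw [hup (by lia), hup (by lia)]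
      exact hp.not_adj ha hab (by lia)

/-- A partially built Gyárfás path: an induced path whose last vertex is in or next to `B`, a
component in `𝓜` of what remains after removing the closed neighbourhood of the others. -/
structure IsGyarfasPath (𝓜 : Set (Set V)) (G : SimpleGraph V) (p : ℤ → V) (r : ℤ) (B : Set V) :
    Prop where
  zero_le : 0 ≤ r
  isInducedPath : IsInducedPath G p 0 r
  isMajorComponent : IsMajorComponent 𝓜 G (p '' Set.Ico 0 r) B
  mem_closedNbhd : p r ∈ closedNbhd G B

namespace IsGyarfasPath

lemma exists_isMajorComponent_ssubset (h : Counterexample 𝓜 G s k) (hp : IsGyarfasPath 𝓜 G p r B) :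
    ∃ B' ⊂ B, IsMajorComponent 𝓜 G (p '' Set.Icc 0 r) B' := by
  obtain ⟨D, hD, hDB⟩ : IsConfined 𝓜 G s B := by
    obtain hr | hr := hp.zero_le.eq_or_lt
    · exact ⟨∅, by simp, fun B' hB' ↦
        hp.isMajorComponent.anti h.intersecting hB' (by simp [← hr])⟩
    · refine IsMajorComponent.isConfined_of_isInducedPath (j := r - 1) h
        (hp.isInducedPath.mono le_rfl (by lia)) (by lia) ?_
      rw [Set.Icc_sub_one_right_eq_Ico]
      exact hp.isMajorComponent
  obtain ⟨B₁, hB₁⟩ := h.exists_isMajorComponent D (by linarith [h.two_mul_le])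
  obtain ⟨B₂, hB₂⟩ := h.exists_isMajorComponent (insert (p r) D)
    ((Set.ncard_insert_le _ _).trans (by linarith [h.two_mul_le, h.two_le]))
  have hB₂B : B₂ ⊆ B := (hB₁.anti h.intersecting hB₂ (Set.subset_insert _ _)).trans (hDB B₁ hB₁)
  have hIcc : p '' Set.Icc 0 r = insert (p r) (p '' Set.Ico 0 r) := by
    rw [← Set.image_insert_eq, Set.Ico_insert_right hp.zero_le]
  have hB₂p : Disjoint B₂ (closedNbhd G (p '' Set.Icc 0 r)) := by
    rw [hIcc, disjoint_closedNbhd_comm, Set.disjoint_insert_left]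
    exact ⟨(disjoint_closedNbhd_comm.1 hB₂.disjoint).notMem_of_mem_left (by simp),
      disjoint_closedNbhd_comm.1 (hp.isMajorComponent.disjoint.mono_left hB₂B)⟩
  obtain ⟨B', hB', hB₂B'⟩ := exists_isComponent_superset hB₂.connected hB₂p
  have hmajor : IsMajorComponent 𝓜 G (p '' Set.Icc 0 r) B' :=
    ⟨hB', h.isUpperSet hB₂B' hB₂.mem⟩
  refine ⟨B', ⟨?_, fun hBB' ↦ ?_⟩, hmajor⟩
  · exact hp.isMajorComponent.anti h.intersecting hmajor (Set.image_mono Set.Ico_subset_Icc_self)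
  · exact (disjoint_closedNbhd_comm.1 hB'.disjoint).notMem_of_mem_left
      ⟨r, ⟨hp.zero_le, le_rfl⟩, rfl⟩ (closedNbhd_mono hBB' hp.mem_closedNbhd)

lemma exists_extension (hp : IsGyarfasPath 𝓜 G p r B) (hB'B : B' ⊂ B)
    (hB' : IsMajorComponent 𝓜 G (p '' Set.Icc 0 r) B') : ∃ q, IsGyarfasPath 𝓜 G q (r + 1) B' := by
  obtain ⟨w, hwB, hwB', b, hb, hbw⟩ : ∃ w ∈ B, w ∉ B' ∧ ∃ b ∈ B', G.Adj b w := by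
    by_contra! hclosed
    obtain ⟨x, hx⟩ := hB'.connected.nonempty
    exact hB'B.not_subset <| subset_of_connected_of_adj_mem hp.isMajorComponent.connected
      (hB'B.subset hx) hx fun a _ haB' y hy hay ↦
        by_contra fun hyB' ↦ hclosed y hy hyB' a haB' hay
  have hwp : w ∉ closedNbhd G (p '' Set.Ico 0 r) :=
    hp.isMajorComponent.disjoint.notMem_of_mem_left hwB
  have hpw {t : ℤ} (ht : 0 ≤ t) (htr : t < r) : p t ≠ w ∧ ¬ G.Adj (p t) w :=
    ⟨fun h ↦ hwp (subset_closedNbhd G _ ⟨t, ⟨ht, htr⟩, h⟩),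
      fun h ↦ hwp (mem_closedNbhd_of_adj ⟨t, ⟨ht, htr⟩, rfl⟩ h)⟩
  have hprw : p r ≠ w := fun h ↦
    (disjoint_closedNbhd_comm.1 hB'.disjoint).notMem_of_mem_left ⟨r, ⟨hp.zero_le, le_rfl⟩, h⟩
      (mem_closedNbhd_of_adj hb hbw)
  have hadj : G.Adj (p r) w := by
    obtain ⟨t, ⟨ht, htr⟩, rfl⟩ | ⟨_, ⟨t, ⟨ht, htr⟩, rfl⟩, htw⟩ :=
      (hB'.mem_or_mem hb hbw).resolve_left hwB'
    all_goals obtain rfl | htr := htr.eq_or_lt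
    exacts [absurd rfl hprw, absurd rfl (hpw ht htr).1, htw, absurd htw (hpw ht htr).2]
  have himage : Function.update p (r + 1) w '' Set.Ico 0 (r + 1) = p '' Set.Icc 0 r := by
    rw [Set.Ico_add_one_right_eq_Icc]
    exact Set.image_congr fun t ht ↦ Function.update_of_ne (Int.lt_add_one_of_le ht.2).ne _ _
  exact ⟨Function.update p (r + 1) w, by linarith [hp.zero_le],
    hp.isInducedPath.update hadj fun _ ht htr ↦ hpw ht htr,
    himage ▸ hB', by simpa using mem_closedNbhd_of_adj hb hbw⟩

end IsGyarfasPath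

lemma IsGyarfasPath.false [Finite V] (h : Counterexample 𝓜 G s k)
    (hp : IsGyarfasPath 𝓜 G p r B) : False := by
  induction B using WellFoundedLT.induction generalizing p r with
  | ind B ih =>
    obtain ⟨B', hB'B, hB'⟩ := hp.exists_isMajorComponent_ssubset h
    obtain ⟨q, hq⟩ := hp.exists_extension hB'B hB'
    exact ih B' hB'B hq

lemma Counterexample.false [Finite V] (h : Counterexample 𝓜 G s k) : False := by
  obtain ⟨B, hB⟩ := h.exists_isMajorComponent ∅ (by simp)
  obtain ⟨x, hx⟩ := hB.connected.nonempty
  have hpath : IsInducedPath G (fun _ ↦ x) 0 0 := ⟨by lia, by lia, by lia⟩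
  exact IsGyarfasPath.false h ⟨le_rfl, hpath, by simpa using hB, subset_closedNbhd G B hx⟩

end Gyarfas

lemma isUpperSet_lt_ncard [Finite V] (c : ℝ) : IsUpperSet {A : Set V | c < A.ncard} :=
  fun _ _ hAB hA ↦ lt_of_lt_of_le (b := (_ : ℝ)) hA (Nat.cast_le.2 (Set.ncard_le_ncard hAB))

lemma intersecting_half_card_lt_ncard [Finite V] :
    {A : Set V | (Nat.card V : ℝ) / 2 < A.ncard}.Intersecting := by
  intro A hA B hB hAB
  have hcard : (A.ncard : ℝ) + B.ncard ≤ Nat.card V := by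
    rw [← Set.ncard_univ, ← Nat.cast_add, ← Set.ncard_union_eq hAB]
    exact Nat.cast_le.2 (Set.ncard_le_ncard (Set.subset_univ _))
  linarith [Set.mem_ofPred.1 hA, Set.mem_ofPred.1 hB]

end WheelSep

theorem main_unweighted_general {ℓ : ℕ} (hℓ : 3 ≤ ℓ) [Finite V] {G : SimpleGraph V}
    (hG : ¬ IsInducedMinor (wheel ℓ) G) {𝓜 : Set (Set V)} (h𝓜 : IsUpperSet 𝓜)
    (hinter : 𝓜.Intersecting) :
    ∃ S D : Set V, D.ncard ≤ (ℓ - 1) ^ 2 ∧ S ⊆ closedNbhd G D ∧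
      ∀ v, v ∉ S → {u | ReachOutside G S u v} ∉ 𝓜 := by
  by_contra! hsep
  have hmajor (D : Set V) (hD : D.ncard ≤ (ℓ - 1) ^ 2) :
      ∃ B, WheelSep.IsMajorComponent 𝓜 G D B := by
    obtain ⟨v, hv, hmem⟩ := hsep _ D hD subset_rfl
    exact ⟨_, WheelSep.isComponent_reachOutside hv, hmem⟩
  exact WheelSep.Counterexample.false ⟨h𝓜, hinter, hmajor,
    WheelSep.fewAttachments_of_not_isInducedMinor_wheel hℓ hG, by lia, (sq _).ge⟩

/-- unweighted main theorem, with `k = (ℓ-1)²`. -/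
theorem main_unweighted :
    ∀ ℓ : ℕ, 3 ≤ ℓ → ∃ k : ℕ, k = (ℓ - 1) ^ 2 ∧
      ∀ (V : Type) [Finite V] (G : SimpleGraph V),
        ¬ IsInducedMinor (wheel ℓ) G →
        ∃ S D : Set V, D.ncard ≤ k ∧ S ⊆ closedNbhd G D ∧
          ∀ v, v ∉ S →
            (({u | ReachOutside G S u v}).ncard : ℝ) ≤ (Nat.card V : ℝ) / 2 := by
  refine fun ℓ hℓ ↦ ⟨_, rfl, fun V _ G hG ↦ ?_⟩
  obtain ⟨S, D, hD, hSD, hS⟩ := main_unweighted_general hℓ hG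
    (WheelSep.isUpperSet_lt_ncard _) WheelSep.intersecting_half_card_lt_ncard
  exact ⟨S, D, hD, hSD, fun v hv ↦ not_lt.1 (hS v hv)⟩
end

section
/- For every integer ℓ ≥ 2 and every finite graph G with weighting w such that G does not contain the ℓ-fan F_ℓ as an induced minor, there is a w-balanced separator of G dominated by at most ℓ vertices, i.e., a set S ⊆ N[D] for some D ⊆ V(G) with |D| ≤ ℓ such that every component of G - S has total weight at most w(V(G))/2. -/
open SimpleGraph

variable {V : Type}

/-!
The proof grows a Gyárfás path: an induced path `f 0, …, f k` together with a component `C` of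
`G - N[f 0, …, f (k - 1)]` that carries more than half of the weight and meets `N[f k]`. If
`N[f 0, …, f k]` is not a balanced separator, its heavy component `C'` lies properly inside `C`, and
a vertex of `C` at the border of `C'` prolongs the path; by finiteness the path gets stuck. Then
`N(C) ∪ N[f k]` is a balanced separator, dominated by `f k` and those `f i`, `i < k`, that have a
neighbour in `N[C]`. Contracting `N[C]` to a hub and cutting `f 0, …, f (k - 1)` at these vertices
gives a fan, so there are fewer than `ℓ` of them.
-/

section Weight

variable [Finite V] {w : V → ℝ} {A B : Set V}

lemma setWeight_mono (hw : ∀ v, 0 ≤ w v) (h : A ⊆ B) : setWeight w A ≤ setWeight w B :=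
  Finset.sum_le_sum_of_subset_of_nonneg (Set.Finite.toFinset_subset_toFinset.2 h) fun v _ _ => hw v

lemma setWeight_union (h : Disjoint A B) :
    setWeight w (A ∪ B) = setWeight w A + setWeight w B := by
  classical
  unfold setWeight
  rw [← Finset.sum_union (Set.Finite.disjoint_toFinset.2 h), Set.Finite.toFinset_union]

/-- `A` carries more than half of the total weight. -/
def IsHeavy (w : V → ℝ) (A : Set V) : Prop :=
  setWeight w (Set.univ : Set V) / 2 < setWeight w A

lemma IsHeavy.setWeight_le_half_of_disjoint (hA : IsHeavy w A) (hw : ∀ v, 0 ≤ w v)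
    (h : Disjoint A B) : setWeight w B ≤ setWeight w (Set.univ : Set V) / 2 := by
  have hunion := setWeight_mono hw (Set.subset_univ (A ∪ B))
  rw [setWeight_union h] at hunion
  unfold IsHeavy at hA
  linarith

lemma IsHeavy.inter_nonempty (hA : IsHeavy w A) (hB : IsHeavy w B) (hw : ∀ v, 0 ≤ w v) :
    (A ∩ B).Nonempty := by
  rw [← Set.not_disjoint_iff_nonempty_inter]
  exact fun h => (hA.setWeight_le_half_of_disjoint hw h).not_gt hB

end Weight

section Neighbourhoods

variable {G : SimpleGraph V} {A B : Set V} {x : V}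

/-- Open neighbourhood `N(A)` of a vertex set. -/
def openNbhd (G : SimpleGraph V) (A : Set V) : Set V :=
  closedNbhd G A \ A

lemma mem_closedNbhd : x ∈ closedNbhd G A ↔ ∃ a ∈ A, a = x ∨ G.Adj a x := by
  simp only [closedNbhd, Set.mem_union, Set.mem_ofPred_eq]
  grind

lemma subset_closedNbhd : A ⊆ closedNbhd G A :=
  Set.subset_union_left

lemma mem_closedNbhd_of_adj {a : V} (ha : a ∈ A) (h : G.Adj a x) : x ∈ closedNbhd G A :=
  mem_closedNbhd.2 ⟨a, ha, .inr h⟩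

@[simp]
lemma closedNbhd_empty : closedNbhd G ∅ = ∅ := by
  ext x
  simp [mem_closedNbhd]

lemma closedNbhd_insert (v : V) (A : Set V) :
    closedNbhd G (insert v A) = closedNbhd G {v} ∪ closedNbhd G A := by
  ext x
  simp [mem_closedNbhd]

lemma disjoint_closedNbhd_comm : Disjoint A (closedNbhd G B) ↔ Disjoint B (closedNbhd G A) := by
  simp only [Set.disjoint_left, mem_closedNbhd, not_exists, not_and]
  grind [G.adj_comm]

lemma closedNbhd_inter_subset : closedNbhd G A ∩ B ⊆ closedNbhd G (A ∩ closedNbhd G B) := by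
  rintro x ⟨hxA, hxB⟩
  obtain ⟨a, ha, hax⟩ := mem_closedNbhd.1 hxA
  exact mem_closedNbhd.2 ⟨a, ⟨ha, mem_closedNbhd.2 ⟨x, hxB, hax.imp Eq.symm Adj.symm⟩⟩, hax⟩

end Neighbourhoods

section Connectivity

variable {G : SimpleGraph V} {A B K S T : Set V}

lemma exists_adj_of_connected_of_not_subset (hK : (G.induce K).Connected)
    (hmeet : (K ∩ A).Nonempty) (hsub : ¬ K ⊆ A) : ∃ x ∈ K ∩ A, ∃ y ∈ K \ A, G.Adj x y := by
  obtain ⟨a, haK, haA⟩ := hmeet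
  obtain ⟨b, hbK, hbA⟩ := Set.not_subset.1 hsub
  obtain ⟨p⟩ := hK.preconnected ⟨a, haK⟩ ⟨b, hbK⟩
  obtain ⟨d, -, hfst, hsnd⟩ := p.exists_boundary_dart {x | x.1 ∈ A} haA hbA
  exact ⟨d.fst, ⟨d.fst.2, hfst⟩, d.snd, ⟨d.snd.2, hsnd⟩, d.adj⟩

lemma subset_of_connected_of_openNbhd_subset (hK : (G.induce K).Connected) (hKS : Disjoint K S)
    (hA : openNbhd G A ⊆ S) (hmeet : (K ∩ A).Nonempty) : K ⊆ A := by
  by_contra hsub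
  obtain ⟨x, hx, y, hy, hxy⟩ := exists_adj_of_connected_of_not_subset hK hmeet hsub
  exact hKS.notMem_of_mem_left hy.1 (hA ⟨mem_closedNbhd_of_adj hx.2 hxy, hy.2⟩)

lemma connected_induce_insert_of_adj {a v : V} (hA : (G.induce A).Connected) (ha : a ∈ A)
    (hav : G.Adj a v) : (G.induce (insert v A)).Connected := by
  rw [← Set.union_singleton]
  exact connected_induce_union hA.preconnected Preconnected.of_subsingleton ha rfl hav

lemma connected_induce_closedNbhd (hA : (G.induce A).Connected) :
    (G.induce (closedNbhd G A)).Connected := by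
  obtain ⟨⟨c, hc⟩⟩ := hA.nonempty
  refine G.induce_connected_of_patches c (subset_closedNbhd hc) fun {v} hv => ?_
  obtain ⟨a, ha, rfl | hav⟩ := mem_closedNbhd.1 hv
  · exact ⟨A, subset_closedNbhd, hc, ha, hA.preconnected _ _⟩
  · exact ⟨insert v A, Set.insert_subset hv subset_closedNbhd, Or.inr hc, Or.inl rfl,
      (connected_induce_insert_of_adj hA ha hav).preconnected _ _⟩

/-- `C` is the vertex set of a connected component of `G - T`, expressed without reference to walks:
it is connected, avoids `T`, and can only be left through `T`. -/
structure IsComponentOutside (G : SimpleGraph V) (T C : Set V) : Prop where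
  connected : (G.induce C).Connected
  disjoint : Disjoint C T
  openNbhd_subset : openNbhd G C ⊆ T

lemma isComponentOutside_reachOutside {v : V} (hv : v ∉ T) :
    IsComponentOutside G T {u | ReachOutside G T u v} where
  connected := by
    classical
    refine G.induce_connected_of_patches v ⟨Walk.nil, by simpa using hv⟩ ?_
    rintro u ⟨p, hp⟩
    refine ⟨{y | y ∈ p.support}, fun y hy => ⟨p.dropUntil y hy, fun z hz => ?_⟩,
      p.end_mem_support, p.start_mem_support, p.connected_induce_support _ _⟩
    exact hp z (p.support_dropUntil_subset_support hy hz)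
  disjoint := Set.disjoint_left.2 fun u ⟨p, hp⟩ => hp u p.start_mem_support
  openNbhd_subset := by
    rintro y ⟨hyN, hy⟩
    obtain ⟨x, ⟨p, hp⟩, rfl | hxy⟩ := mem_closedNbhd.1 hyN
    · exact absurd ⟨p, hp⟩ hy
    · by_contra hyT
      refine hy ⟨Walk.cons hxy.symm p, fun z hz => ?_⟩
      obtain rfl | hz := List.mem_cons.1 hz
      exacts [hyT, hp z hz]

end Connectivity

section BalancedSeparators

variable [Finite V] {G : SimpleGraph V} {w : V → ℝ} {C S T : Set V}

lemma exists_isHeavy_component_of_not_isBalancedSep (h : ¬ IsBalancedSep G w T) :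
    ∃ C, IsComponentOutside G T C ∧ IsHeavy w C := by
  simp only [IsBalancedSep, not_forall, not_le] at h
  obtain ⟨v, hv, hheavy⟩ := h
  exact ⟨_, isComponentOutside_reachOutside hv, hheavy⟩

lemma IsBalancedSep.of_isHeavy (hT : IsBalancedSep G w T) (hw : ∀ v, 0 ≤ w v) (hC : IsHeavy w C)
    (hCS : openNbhd G C ⊆ S) (hTS : C ∩ T ⊆ S) : IsBalancedSep G w S := by
  intro v hv
  have hK := isComponentOutside_reachOutside (G := G) hv
  set K := {u | ReachOutside G S u v}
  have hvK : v ∈ K := ⟨Walk.nil, by simpa using hv⟩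
  by_cases hdisj : Disjoint C K
  · exact hC.setWeight_le_half_of_disjoint hw hdisj
  have hKC : K ⊆ C := subset_of_connected_of_openNbhd_subset hK.connected hK.disjoint hCS
    (Set.inter_comm C K ▸ Set.not_disjoint_iff_nonempty_inter.1 hdisj)
  have hKT : Disjoint K T := Set.disjoint_left.2 fun x hx hxT =>
    hK.disjoint.notMem_of_mem_left hx (hTS ⟨hKC hx, hxT⟩)
  have hvT : v ∉ T := hKT.notMem_of_mem_left hvK
  have hsub : K ⊆ {u | ReachOutside G T u v} :=
    subset_of_connected_of_openNbhd_subset hK.connected hKT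
      (isComponentOutside_reachOutside hvT).openNbhd_subset
      ⟨v, hvK, Walk.nil, by simpa using hvT⟩
  exact (setWeight_mono hw hsub).trans (hT v hvT)

end BalancedSeparators

section InducedPaths

/-- The first `n` terms of the sequence `f` are the consecutive vertices of an induced path of `G`.
The remaining terms are irrelevant; a total sequence makes prolonging and cutting the path easy. -/
structure IsInducedPath (G : SimpleGraph V) (f : ℕ → V) (n : ℕ) : Prop where
  injOn : Set.InjOn f (Set.Iio n)
  adj_iff : ∀ i j, i < j → j < n → (G.Adj (f i) (f j) ↔ j = i + 1)

variable {G : SimpleGraph V} {f : ℕ → V} {n : ℕ}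

lemma isInducedPath_one (f : ℕ → V) : IsInducedPath G f 1 where
  injOn i hi j hj _ := by simp only [Set.mem_Iio] at hi hj; omega
  adj_iff i j hij hj := by omega

lemma IsInducedPath.mono {m : ℕ} (hf : IsInducedPath G f n) (h : m ≤ n) : IsInducedPath G f m where
  injOn := hf.injOn.mono (Set.Iio_subset_Iio h)
  adj_iff i j hij hj := hf.adj_iff i j hij (hj.trans_le h)

lemma IsInducedPath.le_card [Finite V] (hf : IsInducedPath G f n) : n ≤ Nat.card V := by
  rw [← Set.ncard_Iio_nat n, ← hf.injOn.ncard_image]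
  exact Set.ncard_le_card _

lemma eqOn_update_Iio (f : ℕ → V) (n : ℕ) (y : V) :
    Set.EqOn (Function.update f n y) f (Set.Iio n) :=
  fun _ hi => Function.update_of_ne (Set.mem_Iio.1 hi).ne y f

lemma image_Iio_add_one (f : ℕ → V) (n : ℕ) :
    f '' Set.Iio (n + 1) = insert (f n) (f '' Set.Iio n) := by
  have hIio : Set.Iio (n + 1) = insert n (Set.Iio n) := Order.Iio_succ_eq_insert n
  rw [hIio, Set.image_insert_eq]

lemma IsInducedPath.update (hf : IsInducedPath G f (n + 1)) {y : V} (hadj : G.Adj (f n) y)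
    (hy : y ∉ closedNbhd G (f '' Set.Iio n)) :
    IsInducedPath G (Function.update f (n + 1) y) (n + 2) := by
  have hnew : ∀ i < n + 1, f i ≠ y ∧ (G.Adj (f i) y ↔ n + 1 = i + 1) := by
    intro i hi
    obtain hi | rfl := Nat.lt_succ_iff_lt_or_eq.1 hi
    · have hfi : f i ∈ f '' Set.Iio n := Set.mem_image_of_mem f hi
      exact ⟨fun h => hy (h ▸ subset_closedNbhd hfi),
        iff_of_false (fun h => hy (mem_closedNbhd_of_adj hfi h)) (by omega)⟩
    · exact ⟨hadj.ne, iff_of_true hadj rfl⟩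
  have hold := eqOn_update_Iio f (n + 1) y
  constructor
  · have hIio : Set.Iio (n + 2) = insert (n + 1) (Set.Iio (n + 1)) :=
      Order.Iio_succ_eq_insert (n + 1)
    rw [hIio, Set.injOn_insert Set.self_notMem_Iio, hold.image_eq, Function.update_self]
    exact ⟨hf.injOn.congr hold.symm, fun ⟨i, hi, hiy⟩ => (hnew i hi).1 hiy⟩
  · intro i j hij hj
    rw [hold (show i < n + 1 by omega)]
    obtain hj | rfl := Nat.lt_succ_iff_lt_or_eq.1 hj
    · rw [hold hj]
      exact hf.adj_iff i j hij hj
    · rw [Function.update_self]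
      exact (hnew i hij).2

lemma IsInducedPath.connected_image_Ico (hf : IsInducedPath G f n) {a b : ℕ} (hab : a < b)
    (hb : b ≤ n) : (G.induce (f '' Set.Ico a b)).Connected := by
  induction b, hab using Nat.le_induction with
  | base =>
    have hIco : Set.Ico a a.succ = {a} := by
      ext i
      simp only [Set.mem_Ico, Set.mem_singleton_iff]
      omega
    rw [hIco, Set.image_singleton]
    exact Connected.of_subsingleton
  | succ b hab ih =>
    have hlast : f (b - 1) ∈ f '' Set.Ico a b := ⟨b - 1, ⟨by omega, by omega⟩, rfl⟩
    have hadj : G.Adj (f (b - 1)) (f b) :=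
      (hf.adj_iff _ _ (by omega) (by omega)).2 (by omega)
    have hIco : Set.Ico a (b + 1) = insert b (Set.Ico a b) := by
      ext i
      simp only [Set.mem_Ico, Set.mem_insert_iff]
      omega
    rw [hIco, Set.image_insert_eq]
    exact connected_induce_insert_of_adj (ih (by omega)) hlast hadj

lemma IsInducedPath.exists_adj_image_Ico_iff (hf : IsInducedPath G f n) {a b c d : ℕ} (hab : a < b)
    (hbc : b ≤ c) (hcd : c < d) (hd : d ≤ n) :
    (∃ u ∈ f '' Set.Ico a b, ∃ v ∈ f '' Set.Ico c d, G.Adj u v) ↔ c = b := by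
  constructor
  · rintro ⟨_, ⟨i, ⟨-, hib⟩, rfl⟩, _, ⟨j, ⟨hcj, hjd⟩, rfl⟩, hadj⟩
    have hji : j = i + 1 := (hf.adj_iff i j (by omega) (by omega)).1 hadj
    omega
  · rintro rfl
    exact ⟨_, ⟨c - 1, ⟨by omega, by omega⟩, rfl⟩, _, ⟨c, ⟨le_rfl, hcd⟩, rfl⟩,
      (hf.adj_iff _ _ (by omega) (by omega)).2 (by omega)⟩

end InducedPaths

section Fans

variable {G : SimpleGraph V} {H : Set V}

lemma fan_adj_some_some {ℓ : ℕ} {i j : Fin ℓ} :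
    (fan ℓ).Adj (some i) (some j) ↔ (j : ℕ) = i + 1 ∨ (i : ℕ) = j + 1 := by
  simp only [fan, fromRel_adj, ne_eq, Option.some.injEq, reduceCtorEq, false_or]
  grind

lemma isInducedMinor_fan_of_bags {ℓ : ℕ} {B : Fin ℓ → Set V} (hH : (G.induce H).Connected)
    (hB : ∀ j, (G.induce (B j)).Connected) (hdisjH : ∀ j, Disjoint H (B j))
    (hdisj : Pairwise (Function.onFun Disjoint B)) (hhub : ∀ j, ∃ u ∈ H, ∃ v ∈ B j, G.Adj u v)
    (hpath : ∀ i j, i < j → ((∃ u ∈ B i, ∃ v ∈ B j, G.Adj u v) ↔ (j : ℕ) = i + 1)) :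
    IsInducedMinor (fan ℓ) G := by
  have hsymm : ∀ X Y : Set V, (∃ u ∈ X, ∃ v ∈ Y, G.Adj u v) → ∃ u ∈ Y, ∃ v ∈ X, G.Adj u v :=
    fun _ _ ⟨u, hu, v, hv, huv⟩ => ⟨v, hv, u, hu, huv.symm⟩
  refine ⟨fun a => a.elim H B, ?_, ?_, ?_⟩
  · rintro (_ | j)
    exacts [hH, hB j]
  · rintro (_ | i) (_ | j) hij
    · exact absurd rfl hij
    · exact hdisjH j
    · exact (hdisjH i).symm
    · exact hdisj fun h => hij (congrArg some h)
  · rintro (_ | i) (_ | j) hij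
    · exact absurd rfl hij
    · exact iff_of_true (hhub j) (by simp [fan])
    · exact iff_of_true (hsymm _ _ (hhub i)) (by simp [fan])
    · rw [fan_adj_some_some]
      obtain h | h := (show i ≠ j by grind).lt_or_gt
      · exact (hpath i j h).trans (by omega)
      · exact (Iff.intro (hsymm _ _) (hsymm _ _)).trans ((hpath j i h).trans (by omega))

lemma exists_strictMono_forall_lt_mem {P : Set ℕ} {n ℓ : ℕ} (h : ℓ ≤ (Set.Iio n ∩ P).ncard) :
    ∃ m : ℕ → ℕ, StrictMono m ∧ (∀ j < ℓ, m j ∈ P) ∧ m ℓ ≤ n := by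
  classical
  -- Adjoining every `i ≥ n` makes the predicate infinite, which rules out junk values of `Nat.nth`.
  let q : ℕ → Prop := fun i => i ∈ P ∨ n ≤ i
  have hq : {i | q i}.Infinite := (Set.Ici_infinite n).mono fun i => Or.inr
  have hcount : ℓ ≤ Nat.count q n := by
    refine h.trans_eq ?_
    rw [Nat.count_eq_card_filter_range, ← Set.ncard_coe_finset]
    congr 1
    ext i
    simp only [Set.mem_inter_iff, Set.mem_Iio, Finset.coe_filter, Finset.mem_range,
      Set.mem_ofPred_eq, q]
    grind
  refine ⟨Nat.nth q, Nat.nth_strictMono hq, fun j hj => ?_, ?_⟩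
  · have hlt : Nat.nth q j < n := Nat.nth_lt_of_lt_count (hj.trans_le hcount)
    exact (Nat.nth_mem_of_infinite hq j).resolve_right hlt.not_ge
  · calc Nat.nth q ℓ ≤ Nat.nth q (Nat.count q n) := Nat.nth_monotone hq hcount
      _ = n := Nat.nth_count (Or.inr le_rfl)

lemma IsInducedPath.isInducedMinor_fan {f : ℕ → V} {n ℓ : ℕ} (hf : IsInducedPath G f n)
    (hH : (G.induce H).Connected) (hfH : Disjoint (f '' Set.Iio n) H)
    (hℓ : ℓ ≤ (f '' Set.Iio n ∩ closedNbhd G H).ncard) : IsInducedMinor (fan ℓ) G := by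
  have hcard : ℓ ≤ (Set.Iio n ∩ f ⁻¹' closedNbhd G H).ncard := by
    rw [← Set.image_inter_preimage] at hℓ
    exact hℓ.trans (Set.ncard_image_le ((Set.finite_Iio n).inter_of_left _))
  obtain ⟨m, hm, hmN, hmn⟩ := exists_strictMono_forall_lt_mem hcard
  have hlt : ∀ j, m j < m (j + 1) := fun j => hm j.lt_succ_self
  have hle : ∀ j : Fin ℓ, m (j + 1) ≤ n := fun j => (hm.monotone j.2).trans hmn
  have hIco : ∀ j : Fin ℓ, Set.Ico (m j) (m (j + 1)) ⊆ Set.Iio n := fun j _ hi =>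
    hi.2.trans_le (hle j)
  refine isInducedMinor_fan_of_bags (B := fun j => f '' Set.Ico (m j) (m (j + 1))) hH
    (fun j => hf.connected_image_Ico (hlt j) (hle j))
    (fun j => (hfH.mono_left (Set.image_mono (hIco j))).symm) (fun i j hij => ?_) (fun j => ?_)
    (fun i j hij => ?_)
  · exact (hm.monotone.pairwise_disjoint_on_Ico_succ (Fin.val_ne_of_ne hij)).image hf.injOn
      (hIco i) (hIco j)
  · have hmj : m j ∈ Set.Ico (m j) (m (j + 1)) := ⟨le_rfl, hlt j⟩
    obtain ⟨u, hu, rfl | huv⟩ := mem_closedNbhd.1 (hmN j j.2)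
    · exact absurd hu (hfH.notMem_of_mem_left ⟨m j, hIco j hmj, rfl⟩)
    · exact ⟨u, hu, f (m j), ⟨m j, hmj, rfl⟩, huv⟩
  · rw [hf.exists_adj_image_Ico_iff (hlt i) (hm.monotone hij) (hlt j) (hle j), hm.injective.eq_iff]

end Fans

section GyarfasPaths

variable [Finite V] {G : SimpleGraph V} {w : V → ℝ} {f : ℕ → V} {k : ℕ} {C : Set V}

/-- A stage of the Gyárfás path argument: an induced path `f 0, …, f k` and a heavy component `C` of
`G - N[f 0, …, f (k - 1)]` met by the closed neighbourhood of the tip `f k`. -/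
structure IsGyarfasPath (G : SimpleGraph V) (w : V → ℝ) (f : ℕ → V) (k : ℕ) (C : Set V) :
    Prop where
  isInducedPath : IsInducedPath G f (k + 1)
  isComponentOutside : IsComponentOutside G (closedNbhd G (f '' Set.Iio k)) C
  isHeavy : IsHeavy w C
  tip_meets : (C ∩ closedNbhd G {f k}).Nonempty

lemma exists_isGyarfasPath_zero (h : ¬ IsBalancedSep G w ∅) : ∃ f C, IsGyarfasPath G w f 0 C := by
  obtain ⟨C, hC, hheavy⟩ := exists_isHeavy_component_of_not_isBalancedSep h
  obtain ⟨⟨c, hc⟩⟩ := hC.connected.nonempty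
  exact ⟨fun _ => c, C, isInducedPath_one _, by simpa using hC, hheavy, c, hc,
    subset_closedNbhd rfl⟩

lemma IsGyarfasPath.exists_succ (hC : IsGyarfasPath G w f k C) (hw : ∀ v, 0 ≤ w v)
    (h : ¬ IsBalancedSep G w (closedNbhd G (f '' Set.Iio (k + 1)))) :
    ∃ f' C', IsGyarfasPath G w f' (k + 1) C' := by
  obtain ⟨C', hC', hheavy⟩ := exists_isHeavy_component_of_not_isBalancedSep h
  have hN : closedNbhd G (f '' Set.Iio (k + 1)) =
      closedNbhd G {f k} ∪ closedNbhd G (f '' Set.Iio k) := by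
    rw [image_Iio_add_one, closedNbhd_insert]
  obtain ⟨hC'tip, hC'path⟩ := Set.disjoint_union_right.1 (hN ▸ hC'.disjoint)
  have hC'C : C' ⊆ C := subset_of_connected_of_openNbhd_subset hC'.connected hC'path
    hC.isComponentOutside.openNbhd_subset (hheavy.inter_nonempty hC.isHeavy hw)
  obtain ⟨c, hcC, hctip⟩ := hC.tip_meets
  obtain ⟨x, hx, y, hy, hxy⟩ := exists_adj_of_connected_of_not_subset
    hC.isComponentOutside.connected (hC'.connected.nonempty.elim fun x => ⟨x, hC'C x.2, x.2⟩)
    fun hCC' => hC'tip.notMem_of_mem_left (hCC' hcC) hctip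
  have hypath : y ∉ closedNbhd G (f '' Set.Iio k) :=
    hC.isComponentOutside.disjoint.notMem_of_mem_left hy.1
  have hytip : y ∈ closedNbhd G {f k} := by
    have hyN := hC'.openNbhd_subset ⟨mem_closedNbhd_of_adj hx.2 hxy, hy.2⟩
    exact (hN ▸ hyN).resolve_right hypath
  have hadj : G.Adj (f k) y := by
    obtain ⟨_, rfl, rfl | hadj⟩ := mem_closedNbhd.1 hytip
    · exact absurd (mem_closedNbhd_of_adj (Set.mem_singleton _) hxy.symm)
        (hC'tip.notMem_of_mem_left hx.2)
    · exact hadj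
  refine ⟨Function.update f (k + 1) y, C', hC.isInducedPath.update hadj hypath, ?_, hheavy, x, hx.2,
    ?_⟩
  · rwa [(eqOn_update_Iio f (k + 1) y).image_eq]
  · rw [Function.update_self]
    exact mem_closedNbhd_of_adj rfl hxy.symm

lemma exists_isGyarfasPath_isBalancedSep (hw : ∀ v, 0 ≤ w v) (h : ¬ IsBalancedSep G w ∅) :
    ∃ f k C, IsGyarfasPath G w f k C ∧
      IsBalancedSep G w (closedNbhd G (f '' Set.Iio (k + 1))) := by
  by_contra! hstuck
  have hlong : ∀ k, ∃ f C, IsGyarfasPath G w f k C := by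
    intro k
    induction k with
    | zero => exact exists_isGyarfasPath_zero h
    | succ k ih =>
      obtain ⟨f, C, hC⟩ := ih
      exact hC.exists_succ hw (hstuck f k C hC)
  obtain ⟨f, C, hC⟩ := hlong (Nat.card V)
  exact hC.isInducedPath.le_card.not_gt (Nat.lt_succ_self _)

lemma IsGyarfasPath.isBalancedSep (hC : IsGyarfasPath G w f k C) (hw : ∀ v, 0 ≤ w v)
    (h : IsBalancedSep G w (closedNbhd G (f '' Set.Iio (k + 1)))) :
    IsBalancedSep G w (openNbhd G C ∪ closedNbhd G {f k}) := by
  refine h.of_isHeavy hw hC.isHeavy Set.subset_union_left fun x ⟨hxC, hxN⟩ => ?_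
  rw [image_Iio_add_one, closedNbhd_insert] at hxN
  exact Or.inr (hxN.resolve_right (hC.isComponentOutside.disjoint.notMem_of_mem_left hxC))

lemma IsGyarfasPath.openNbhd_union_closedNbhd_subset (hC : IsGyarfasPath G w f k C) :
    openNbhd G C ∪ closedNbhd G {f k} ⊆
      closedNbhd G (insert (f k) (f '' Set.Iio k ∩ closedNbhd G (closedNbhd G C))) := by
  rw [closedNbhd_insert, Set.union_comm]
  refine Set.union_subset_union_right _ fun y hy => closedNbhd_inter_subset ⟨?_, hy.1⟩
  exact hC.isComponentOutside.openNbhd_subset hy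

lemma IsGyarfasPath.ncard_inter_closedNbhd_lt {ℓ : ℕ} (hC : IsGyarfasPath G w f k C)
    (hfree : ¬ IsInducedMinor (fan ℓ) G) :
    (f '' Set.Iio k ∩ closedNbhd G (closedNbhd G C)).ncard < ℓ := by
  refine lt_of_not_ge fun hℓ => hfree ?_
  exact (hC.isInducedPath.mono k.le_succ).isInducedMinor_fan
    (connected_induce_closedNbhd hC.isComponentOutside.connected)
    (disjoint_closedNbhd_comm.1 hC.isComponentOutside.disjoint) hℓ

end GyarfasPaths

/-- fan-induced-minor-free graphs have balanced separators
dominated by at most `ℓ` vertices. -/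
theorem fan_free [Finite V] (G : SimpleGraph V) (ℓ : ℕ) (hℓ : 2 ≤ ℓ)
    (hfree : ¬ IsInducedMinor (fan ℓ) G)
    (w : V → ℝ) (hw0 : ∀ v, 0 ≤ w v) :
    ∃ S D : Set V, D.ncard ≤ ℓ ∧ S ⊆ closedNbhd G D ∧
      IsBalancedSep G w S := by
  by_cases hempty : IsBalancedSep G w ∅
  · exact ⟨∅, ∅, by simp, by simp, hempty⟩
  obtain ⟨f, k, C, hC, hbal⟩ := exists_isGyarfasPath_isBalancedSep hw0 hempty
  exact ⟨openNbhd G C ∪ closedNbhd G {f k},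
    insert (f k) (f '' Set.Iio k ∩ closedNbhd G (closedNbhd G C)),
    (Set.ncard_insert_le _ _).trans (hC.ncard_inter_closedNbhd_lt hfree),
    hC.openNbhd_union_closedNbhd_subset, hC.isBalancedSep hw0 hbal⟩
end
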